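/- Let s ∈ ℝ and let z ∈ ℝ satisfy |z| < (|s| + |1−s|)^{−1} and z < 1/2. Then the series Σ_{ℓ≥0} z^ℓ·E[s^{N_ℓ}] converges absolutely and equals the (absolutely convergent) Gauss hypergeometric series Σ_{m≥0} (Π_{i=0}^{m−1} (i(i+1) − 2s))/(m!·(m+1)!) · (z/(z−1))^m; this series is F(β, 1−β; 2; z/(z−1)) with β = 1/2 + (1/2)√(1+8s), since (β)_m·(1−β)_m = Π_{i=0}^{m−1}(i(i+1) − 2s) and (2)_m·m! = m!·(m+1)!. -/

import Mathlib

open MeasureTheory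

noncomputable section

/-- The triangle with vertices (0,0), (1,0), (0,1). -/
def T : Set (ℝ × ℝ) := convexHull ℝ {(0, 0), (1, 0), (0, 1)}

/-- The uniform distribution on `T`: twice Lebesgue measure restricted to `T`. -/
def μT : Measure (ℝ × ℝ) := (2 : ENNReal) • (volume.restrict T)

/-- Joint law of `n` independent uniform points in `T`. -/
def P (n : ℕ) : Measure (Fin n → ℝ × ℝ) := Measure.pi fun _ => μT

/-- The random convex chain: convex hull of the points together with `(1,0)` and `(0,1)`. -/
def Tchain (n : ℕ) (ω : Fin n → ℝ × ℝ) : Set (ℝ × ℝ) :=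
  convexHull ℝ (Set.range ω ∪ {(1, 0), (0, 1)})

/-- Normalized area `V_n = 2 vol(T_n)`. -/
def V (n : ℕ) (ω : Fin n → ℝ × ℝ) : ℝ := 2 * (volume (Tchain n ω)).toReal

/-- Number of vertices of `T_n` other than the two corners. -/
def N (n : ℕ) (ω : Fin n → ℝ × ℝ) : ℕ :=
  (Set.extremePoints ℝ (Tchain n ω)).ncard - 2

/-- Normalized moments `q_{n,k} = C(n+k,k) E[V_n^k]`. -/
def q (n k : ℕ) : ℝ := ((n + k).choose k : ℝ) * ∫ ω, (V n ω) ^ k ∂ P n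

/-- Probability generating function of `N_n`. -/
def G (n : ℕ) (t : ℝ) : ℝ := ∫ ω, t ^ (N n ω) ∂ P n

/-- Harmonic number. -/
def H (j : ℕ) : ℝ := ∑ i ∈ Finset.range j, 1 / ((i : ℝ) + 1)

/-- Generalized harmonic number of order 2. -/
def H2 (j : ℕ) : ℝ := ∑ i ∈ Finset.range j, 1 / ((i : ℝ) + 1) ^ 2

/-- `c(k,ℓ)`: elementary symmetric polynomial `e_k` of `2/(j(j+1))`, `j = 1,…,ℓ`. -/
def c (k l : ℕ) : ℝ :=
  ∑ S ∈ (Finset.Icc 1 l).powersetCard k, ∏ j ∈ S, 2 / ((j : ℝ) * ((j : ℝ) + 1))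

/-- The points of `W` not in the convex hull of the other points. -/
def vert (W : Set (ℝ × ℝ)) : Set (ℝ × ℝ) := {w | w ∈ W ∧ w ∉ convexHull ℝ (W \ {w})}

theorem extremePoints_convexHull_eq_vert (W : Set (ℝ × ℝ)) :
    (convexHull ℝ W).extremePoints ℝ = vert W := by
  ext w
  constructor
  · intro h
    have hW := extremePoints_convexHull_subset h
    refine ⟨hW, fun hw => ?_⟩
    rw [(convex_convexHull ℝ W).mem_extremePoints_iff_mem_sdiff_convexHull_sdiff] at h
    exact h.2 (convexHull_mono (Set.sdiff_subset_sdiff_left (subset_convexHull ℝ W)) hw)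
  · rintro ⟨hW, hw⟩
    rw [mem_extremePoints_iff_left]
    refine ⟨subset_convexHull ℝ W hW, ?_⟩
    have hWe : insert w (W \ {w}) = W := by
      rw [Set.insert_sdiff_singleton, Set.insert_eq_of_mem hW]
    intro u hu v hv huv
    rcases Set.eq_empty_or_nonempty (W \ {w}) with he | hne
    · rw [← hWe, he] at hu
      simpa using hu
    · rw [← hWe, convexHull_insert hne, mem_convexJoin] at hu hv
      obtain ⟨_, rfl, u', hu', hu⟩ := hu
      obtain ⟨w', hw', v', hv', hv⟩ := hv
      rw [Set.mem_singleton_iff] at hw'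
      subst hw'
      obtain ⟨a1, a, ha1, ha, haa, rfl⟩ := hu
      obtain ⟨b1, b, hb1, hb, hbb, rfl⟩ := hv
      obtain ⟨t, t1, ht, ht1, htt, h⟩ := huv
      have ha1' : a1 = 1 - a := by linarith
      have hb1' : b1 = 1 - b := by linarith
      have ht1' : t1 = 1 - t := by linarith
      subst ha1' hb1' ht1'
      have e1 := congrArg Prod.fst h
      have e2 := congrArg Prod.snd h
      simp only [Prod.fst_add, Prod.smul_fst, Prod.snd_add, Prod.smul_snd, smul_eq_mul] at e1 e2
      have hta : 0 ≤ t * a := by positivity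
      have htb : 0 ≤ (1 - t) * b := by positivity
      rcases (add_nonneg hta htb).eq_or_lt with h0 | h0
      · have : t * a = 0 := by linarith
        have ha0 : a = 0 := by
          rcases mul_eq_zero.1 this with h | h
          · linarith
          · exact h
        subst ha0
        simp
      · exfalso
        apply hw
        have := convex_iff_div.1 (convex_convexHull ℝ (W \ {w'})) hu' hv' hta htb h0
        convert this using 1
        ext
        · simp only [Prod.fst_add, Prod.smul_fst, smul_eq_mul]
          field_simp
          linarith
        · simp only [Prod.snd_add, Prod.smul_snd, smul_eq_mul]
          field_simp
          linarith

theorem vert_congr {W W' : Set (ℝ × ℝ)} (h : convexHull ℝ W = convexHull ℝ W') :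
    vert W = vert W' := by
  rw [← extremePoints_convexHull_eq_vert, h, extremePoints_convexHull_eq_vert]

theorem vert_image (f : (ℝ × ℝ) →ᵃ[ℝ] (ℝ × ℝ)) (hf : Function.Injective f) (W : Set (ℝ × ℝ)) :
    vert (f '' W) = f '' vert W := by
  have key : ∀ w, convexHull ℝ (f '' W \ {f w}) = f '' convexHull ℝ (W \ {w}) := by
    intro w
    rw [f.image_convexHull, Set.image_sdiff hf, Set.image_singleton]
  ext x
  constructor
  · rintro ⟨⟨w, hw, rfl⟩, hx⟩
    rw [key, hf.mem_set_image] at hx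
    exact ⟨w, ⟨hw, hx⟩, rfl⟩
  · rintro ⟨w, ⟨hw, hx⟩, rfl⟩
    refine ⟨⟨w, hw, rfl⟩, ?_⟩
    rwa [key, hf.mem_set_image]

theorem mem_T_iff (X : ℝ × ℝ) : X ∈ T ↔ 0 ≤ X.1 ∧ 0 ≤ X.2 ∧ X.1 + X.2 ≤ 1 := by
  unfold T
  constructor
  · intro h
    have hc : Convex ℝ {X : ℝ × ℝ | 0 ≤ X.1 ∧ 0 ≤ X.2 ∧ X.1 + X.2 ≤ 1} := by
      rintro x ⟨h1, h2, h3⟩ y ⟨g1, g2, g3⟩ a b ha hb hab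
      simp only [Set.mem_ofPred_eq, Prod.fst_add, Prod.smul_fst, Prod.snd_add, Prod.smul_snd,
        smul_eq_mul]
      refine ⟨by positivity, by positivity, ?_⟩
      nlinarith
    refine convexHull_min ?_ hc h
    rintro x (rfl | rfl | rfl) <;> norm_num
  · rintro ⟨h1, h2, h3⟩
    have := mem_convexHull_of_exists_fintype (R := ℝ) (s := {((0:ℝ), (0:ℝ)), (1, 0), (0, 1)}) (x := X)
      ![1 - X.1 - X.2, X.1, X.2] ![((0:ℝ), (0:ℝ)), (1, 0), (0, 1)]
    apply this
    · intro i; fin_cases i <;> simp <;> linarith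
    · simp [Fin.sum_univ_three]; ring
    · intro i; fin_cases i <;> simp
    · ext <;> simp [Fin.sum_univ_three]

/-- The region of `T` below the line through `(x,0)` and `(0,1)`. -/
def Rg (x : ℝ) : Set (ℝ × ℝ) := {X | 0 ≤ X.1 ∧ 0 ≤ X.2 ∧ X.1 + x * X.2 ≤ x}

theorem convex_Rg (x : ℝ) : Convex ℝ (Rg x) := by
  rintro u ⟨h1, h2, h3⟩ v ⟨g1, g2, g3⟩ a b ha hb hab
  simp only [Rg, Set.mem_ofPred_eq, Prod.fst_add, Prod.smul_fst, Prod.snd_add, Prod.smul_snd,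
    smul_eq_mul]
  refine ⟨by positivity, by positivity, ?_⟩
  have : b = 1 - a := by linarith
  subst this
  nlinarith

theorem mem_segment_pB {x : ℝ} (hx : 0 < x) {Y : ℝ × ℝ} (h1 : 0 ≤ Y.1) (h2 : 0 ≤ Y.2)
    (h3 : Y.1 + x * Y.2 = x) : Y ∈ segment ℝ ((x, 0) : ℝ × ℝ) (0, 1) := by
  refine ⟨1 - Y.2, Y.2, ?_, h2, by ring, ?_⟩
  · by_contra hcon
    push Not at hcon
    nlinarith
  · ext
    · simp; linarith
    · simp

theorem vert_insert_A {x : ℝ} (hx : 0 < x) (hx1 : x < 1) {U : Set (ℝ × ℝ)} (hU : U ⊆ Rg x)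
    (hy : ∀ w ∈ U, 0 < w.2) :
    vert (insert (1, 0) (U ∪ {(x, 0), (0, 1)})) =
      insert (1, 0) (vert (U ∪ {(x, 0), (0, 1)})) := by
  set W' : Set (ℝ × ℝ) := U ∪ {(x, 0), (0, 1)} with hW'
  have hp : ((x, 0) : ℝ × ℝ) ∈ W' := by simp [hW']
  have hB : ((0, 1) : ℝ × ℝ) ∈ W' := by simp [hW']
  have hW'R : W' ⊆ Rg x := by
    rintro w (hw | rfl | rfl)
    · exact hU hw
    · simp [Rg, hx.le]
    · simp [Rg]
  have hconv : convexHull ℝ W' ⊆ Rg x := convexHull_min hW'R (convex_Rg x)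
  have hAR : ((1, 0) : ℝ × ℝ) ∉ Rg x := by simp [Rg]; linarith
  have hA : ((1, 0) : ℝ × ℝ) ∉ W' := fun h => hAR (hW'R h)
  have key : ∀ w ∈ W', w ∈ convexHull ℝ (insert (1, 0) W' \ {w}) →
      w ∈ convexHull ℝ (W' \ {w}) := by
    intro w hw h
    have hwA : (1, 0) ≠ w := fun e => hA (e ▸ hw)
    rw [Set.insert_sdiff_of_notMem _ (by simpa using hwA)] at h
    have hne : (W' \ {w}).Nonempty := by
      by_cases h : w = (x, 0)
      · exact ⟨(0, 1), hB, by rw [h]; simp⟩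
      · exact ⟨(x, 0), hp, by simpa using fun e => h e.symm⟩
    rw [convexHull_insert hne, mem_convexJoin] at h
    obtain ⟨_, rfl, u, hu, a, b, ha, hb, hab, he⟩ := h
    have hb1 : a = 1 - b := by linarith
    subst hb1
    have e1 := congrArg Prod.fst he
    have e2 := congrArg Prod.snd he
    simp only [Prod.fst_add, Prod.smul_fst, Prod.snd_add, Prod.smul_snd, smul_eq_mul] at e1 e2
    have huR : u ∈ Rg x := hconv (convexHull_mono Set.sdiff_subset hu)
    obtain ⟨u1, u2, u3⟩ := huR
    obtain ⟨w1, w2, w3⟩ := hW'R hw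
    by_cases hwB : w = (0, 1)
    · have : b = 1 := by
        rw [hwB] at e1
        simp only at e1
        have := mul_nonneg hb u1
        nlinarith
      subst this
      simp at he
      rwa [he] at hu
    by_cases hwp : w = (x, 0)
    · exfalso
      have hpos : convexHull ℝ (W' \ {w}) ⊆ {X | 0 < X.2} := by
        apply convexHull_min
        · rintro v ⟨(hv | rfl | rfl), hv2⟩
          · exact hy v hv
          · exact absurd hwp.symm hv2
          · simp
        · intro u hu v hv a b ha hb hab
          simp only [Set.mem_ofPred_eq, Prod.snd_add, Prod.smul_snd, smul_eq_mul] at hu hv ⊢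
          rcases ha.eq_or_lt with h | h
          · have : b = 1 := by linarith
            subst this; rw [← h]; linarith
          · have := mul_pos h hu
            have := mul_nonneg hb hv.le
            linarith
      have hu0 : 0 < u.2 := hpos hu
      have : b = 0 := by
        rw [hwp] at e2
        simp only at e2
        have : b * u.2 = 0 := by linarith
        rcases mul_eq_zero.1 this with h | h
        · exact h
        · linarith
      subst this
      rw [hwp] at e1
      simp at e1
      linarith
    · have hpm : ((x, 0) : ℝ × ℝ) ∈ convexHull ℝ (W' \ {w}) :=
        subset_convexHull ℝ _ ⟨hp, by simpa using fun e => hwp e.symm⟩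
      have hBm : ((0, 1) : ℝ × ℝ) ∈ convexHull ℝ (W' \ {w}) :=
        subset_convexHull ℝ _ ⟨hB, by simpa using fun e => hwB e.symm⟩
      -- the crossing point of the segment from `u` to `(1,0)` with the line
      set d : ℝ := x - (u.1 + x * u.2) with hd
      have hd0 : 0 ≤ d := by simp only [hd]; linarith
      have hS : 0 < d + (1 - x) := by linarith
      set Y : ℝ × ℝ := (d / (d + (1 - x))) • ((1, 0) : ℝ × ℝ) + ((1 - x) / (d + (1 - x))) • u with hY
      have hY1 : Y.1 = (d + (1 - x) * u.1) / (d + (1 - x)) := by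
        simp [hY]; field_simp
      have hY2 : Y.2 = ((1 - x) * u.2) / (d + (1 - x)) := by
        simp [hY]; field_simp
      have hx1' : 0 ≤ 1 - x := by linarith
      have hYm : Y ∈ convexHull ℝ (W' \ {w}) := by
        apply (convex_convexHull ℝ _).segment_subset hpm hBm
        apply mem_segment_pB hx
        · rw [hY1]; positivity
        · rw [hY2]; positivity
        · rw [hY1, hY2]; field_simp; simp only [hd]; ring
      rcases hd0.eq_or_lt with h0 | h0
      · -- `u` is on the line
        have hb1 : b = 1 := by
          rw [← e1, ← e2] at w3
          have : u.1 + x * u.2 = x := by linarith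
          have h5 : (1 - b) * (1 - x) ≤ 0 := by nlinarith
          nlinarith
        subst hb1
        simp at he
        rwa [he] at hu
      · -- w = τ Y + (1-τ) u
        set τ : ℝ := (1 - b) * (d + (1 - x)) / d with hτ
        have hτ0 : 0 ≤ τ := by simp only [hτ]; positivity
        have hτ1 : τ ≤ 1 := by
          rw [hτ, div_le_one h0]
          rw [← e1, ← e2] at w3
          simp only [hd]
          nlinarith
        have := (convex_convexHull ℝ (W' \ {w})) hYm hu hτ0 (by linarith : 0 ≤ 1 - τ) (by ring)
        convert this using 1
        ext
        · simp only [Prod.fst_add, Prod.smul_fst, smul_eq_mul, hY1, ← e1, hτ]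
          field_simp
          ring
        · simp only [Prod.snd_add, Prod.smul_snd, smul_eq_mul, hY2, ← e2, hτ]
          field_simp
          ring
  ext w
  simp only [vert, Set.mem_ofPred_eq, Set.mem_insert_iff]
  constructor
  · rintro ⟨rfl | hw, h⟩
    · left; rfl
    · right
      exact ⟨hw, fun h' => h (convexHull_mono (Set.sdiff_subset_sdiff_left (Set.subset_insert _ _)) h')⟩
  · rintro (rfl | ⟨hw, h⟩)
    · refine ⟨Or.inl rfl, fun h => hAR (hconv ?_)⟩
      rw [Set.insert_sdiff_self_of_notMem hA] at h
      exact h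
    · exact ⟨Or.inr hw, fun h' => h (key w hw h')⟩

theorem vert_peel {x : ℝ} (hx : 0 < x) (hx1 : x < 1) {W : Set (ℝ × ℝ)} (hW : W ⊆ T)
    (hy : ∀ w ∈ W, 0 < w.2) :
    vert (insert (x, 0) W ∪ {(1, 0), (0, 1)}) =
      insert (1, 0) (vert ((W ∩ Rg x) ∪ {(x, 0), (0, 1)})) := by
  rw [← vert_insert_A hx hx1 Set.inter_subset_right (fun w hw => hy w hw.1)]
  apply vert_congr
  apply subset_antisymm
  · apply convexHull_min _ (convex_convexHull ℝ _)
    set C := convexHull ℝ (insert (1, 0) (W ∩ Rg x ∪ {(x, 0), (0, 1)})) with hC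
    have hA : ((1, 0) : ℝ × ℝ) ∈ C := subset_convexHull ℝ _ (by simp)
    have hB : ((0, 1) : ℝ × ℝ) ∈ C := subset_convexHull ℝ _ (by simp)
    have hp : ((x, 0) : ℝ × ℝ) ∈ C := subset_convexHull ℝ _ (by simp)
    rintro w ((rfl | hw) | rfl | rfl)
    · exact hp
    · by_cases hR : w ∈ Rg x
      · exact subset_convexHull ℝ _ (by simp [hw, hR])
      · obtain ⟨h1, h2, h3⟩ := (mem_T_iff w).1 (hW hw)
        have h4 : x < w.1 + x * w.2 := by
          by_contra hcon
          exact hR ⟨h1, h2, by linarith⟩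
        have hx1' : 0 < 1 - x := by linarith
        -- barycentric coordinates with respect to A, p, B
        have := mem_convexHull_of_exists_fintype (R := ℝ) (s := C) (x := w)
          ![(w.1 + x * w.2 - x) / (1 - x), (1 - w.1 - w.2) / (1 - x), w.2]
          ![((1:ℝ), (0:ℝ)), (x, 0), (0, 1)]
        rw [(convex_convexHull ℝ _).convexHull_eq] at this
        apply this
        · intro i; fin_cases i
          · exact div_nonneg (by linarith) hx1'.le
          · exact div_nonneg (by linarith) hx1'.le
          · exact h2
        · simp [Fin.sum_univ_three]; field_simp; ring
        · intro i; fin_cases i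
          · exact hA
          · exact hp
          · exact hB
        · ext
          · simp [Fin.sum_univ_three]; field_simp; ring
          · simp [Fin.sum_univ_three]
    · exact hA
    · exact hB
  · apply convexHull_mono
    rintro w (rfl | ⟨hw, -⟩ | rfl | rfl) <;> simp_all

/-- number of vertices of the chain other than the two corners `a`, `b`. -/
def nv (a b : ℝ × ℝ) (W : Set (ℝ × ℝ)) : ℕ := (vert (W ∪ {a, b})).ncard - 2

theorem N_eq_nv (n : ℕ) (ω : Fin n → ℝ × ℝ) : N n ω = nv (1, 0) (0, 1) (Set.range ω) := by
  rw [N, Tchain, extremePoints_convexHull_eq_vert, nv]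

theorem nv_image (f : (ℝ × ℝ) →ᵃ[ℝ] (ℝ × ℝ)) (hf : Function.Injective f) (a b : ℝ × ℝ)
    (W : Set (ℝ × ℝ)) : nv (f a) (f b) (f '' W) = nv a b W := by
  rw [nv, nv, ← Set.image_pair, ← Set.image_union, vert_image f hf, Set.ncard_image_of_injective _ hf]

theorem two_le_vert {x : ℝ} (hx : 0 < x) {U : Set (ℝ × ℝ)} (hf : U.Finite) (hU : U ⊆ Rg x)
    (hy : ∀ w ∈ U, 0 < w.2) : 2 ≤ (vert (U ∪ {(x, 0), (0, 1)})).ncard := by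
  have hsub : ({(x, 0), (0, 1)} : Set (ℝ × ℝ)) ⊆ vert (U ∪ {(x, 0), (0, 1)}) := by
    rintro w (rfl | rfl)
    · refine ⟨by simp, fun h => ?_⟩
      have hpos : convexHull ℝ ((U ∪ {(x, 0), (0, 1)}) \ {(x, 0)}) ⊆ {X : ℝ × ℝ | 0 < X.2} := by
        apply convexHull_min
        · rintro v ⟨(hv | rfl | rfl), hv2⟩
          · exact hy v hv
          · exact absurd rfl hv2
          · simp
        · exact convex_halfSpace_gt (f := fun X : ℝ × ℝ => X.2) ⟨fun _ _ => rfl, fun _ _ => rfl⟩ 0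
      have h7 := hpos h
      simp at h7
    · refine ⟨by simp, fun h => ?_⟩
      have hpos : convexHull ℝ ((U ∪ {(x, 0), (0, 1)}) \ {(0, 1)}) ⊆ {X : ℝ × ℝ | X.2 < 1} := by
        apply convexHull_min
        · rintro v ⟨(hv | rfl | rfl), hv2⟩
          · obtain ⟨h1, h2, h3⟩ := hU hv
            show v.2 < 1
            by_contra hcon
            push Not at hcon
            apply hv2
            have h6 := mul_le_mul_of_nonneg_left hcon hx.le
            have : v.1 = 0 := by linarith
            have : v.2 = 1 := by nlinarith
            ext <;> simp [*]
          · simp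
          · exact absurd rfl hv2
        · exact convex_halfSpace_lt (f := fun X : ℝ × ℝ => X.2) ⟨fun _ _ => rfl, fun _ _ => rfl⟩ 1
      have h7 := hpos h
      simp at h7
  have hfin : (vert (U ∪ {(x, 0), (0, 1)})).Finite :=
    (hf.union (by simp)).subset (fun w hw => hw.1)
  have := Set.ncard_le_ncard hsub hfin
  rwa [Set.ncard_pair (by simp)] at this

theorem nv_peel {x : ℝ} (hx : 0 < x) (hx1 : x < 1) {W : Set (ℝ × ℝ)} (hf : W.Finite) (hW : W ⊆ T)
    (hy : ∀ w ∈ W, 0 < w.2) :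
    nv (1, 0) (0, 1) (insert (x, 0) W) = nv (x, 0) (0, 1) (W ∩ Rg x) + 1 := by
  have h2 := two_le_vert hx (hf.subset Set.inter_subset_left) (Set.inter_subset_right (s := W) (t := Rg x))
    (fun w hw => hy w hw.1)
  have hfin : (vert (W ∩ Rg x ∪ {(x, 0), (0, 1)})).Finite :=
    ((hf.subset Set.inter_subset_left).union (by simp)).subset (fun w hw => hw.1)
  rw [nv, vert_peel hx hx1 hW hy, nv, Set.ncard_insert_of_notMem _ hfin]
  · omega
  · rintro ⟨h | h | h, -⟩
    · have := h.2.2.2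
      norm_num at this
      linarith
    · have := congrArg Prod.fst h
      norm_num at this
      linarith
    · simp at h

theorem isClosed_mem_convexHull {κ : Type} [Fintype κ] (i : κ) (J : Set κ) :
    IsClosed {ω : κ → ℝ × ℝ | ω i ∈ convexHull ℝ (ω '' J)} := by
  classical
  set K : Set (κ → ℝ) := convexHull ℝ ((fun j => Pi.single j (1 : ℝ)) '' J) with hK
  have hKc : IsCompact K := Set.Finite.isCompact_convexHull (𝕜 := ℝ) ((Set.toFinite J).image _)
  have : CompactSpace K := isCompact_iff_compactSpace.1 hKc
  have hcl : IsClosed {p : K × (κ → ℝ × ℝ) | ∑ j, (p.1 : κ → ℝ) j • p.2 j = p.2 i} := by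
    apply isClosed_eq
    · refine continuous_finset_sum _ fun j _ => ?_
      exact ((continuous_apply j).comp (continuous_subtype_val.comp continuous_fst)).smul
        ((continuous_apply j).comp continuous_snd)
    · exact (continuous_apply i).comp continuous_snd
  have := isClosedMap_snd_of_compactSpace _ hcl
  convert this using 1
  ext ω
  have h1 : convexHull ℝ (ω '' J) = (Fintype.linearCombination ℝ ω) '' K := by
    rw [hK, LinearMap.image_convexHull, Set.image_image]
    congr 1
    apply Set.image_congr
    intro j _
    simp [Fintype.linearCombination_apply_single]
  simp only [Set.mem_ofPred_eq, h1, Set.mem_image, Fintype.linearCombination_apply]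
  constructor
  · rintro ⟨t, ht, h⟩
    exact ⟨(⟨t, ht⟩, ω), h, rfl⟩
  · rintro ⟨⟨t, ω'⟩, h, rfl⟩
    exact ⟨t, t.2, h⟩

theorem measurableSet_mem_vert {κ : Type} [Fintype κ] (i : κ) :
    MeasurableSet {ω : κ → ℝ × ℝ | ω i ∈ vert (Set.range ω)} := by
  classical
  have : {ω : κ → ℝ × ℝ | ω i ∈ vert (Set.range ω)} =
      (⋃ J : Set κ, ((⋂ j ∈ J, {ω : κ → ℝ × ℝ | ω j ≠ ω i}) ∩
        {ω : κ → ℝ × ℝ | ω i ∈ convexHull ℝ (ω '' J)}))ᶜ := by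
    ext ω
    simp only [vert, Set.mem_ofPred_eq, Set.mem_range_self, true_and, Set.mem_compl_iff,
      Set.mem_iUnion, Set.mem_inter_iff, Set.mem_iInter, not_iff_not]
    constructor
    · intro h
      refine ⟨{j | ω j ≠ ω i}, fun j hj => hj, convexHull_mono ?_ h⟩
      rintro _ ⟨⟨j, rfl⟩, hj⟩
      exact ⟨j, hj, rfl⟩
    · rintro ⟨J, hJ, h⟩
      refine convexHull_mono ?_ h
      rintro _ ⟨j, hj, rfl⟩
      exact ⟨⟨j, rfl⟩, hJ j hj⟩
  rw [this]
  apply MeasurableSet.compl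
  apply MeasurableSet.iUnion
  intro J
  apply MeasurableSet.inter
  · apply MeasurableSet.iInter
    intro j
    apply MeasurableSet.iInter
    intro _
    apply (measurableSet_eq_fun (measurable_pi_apply j) (measurable_pi_apply i)).compl
  · exact (isClosed_mem_convexHull i J).measurableSet

theorem ncard_vert_eq (n : ℕ) (ω : Fin n → ℝ × ℝ) :
    (vert (Set.range ω)).ncard =
      ∑ i, ({ω : Fin n → ℝ × ℝ | ω i ∈ vert (Set.range ω)} ∩
        ⋂ j : Fin n, ⋂ (_ : j < i), {ω : Fin n → ℝ × ℝ | ω j ≠ ω i}).indicator (fun _ => 1) ω := by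
  classical
  simp only [Set.indicator_apply]
  rw [Finset.sum_boole]
  simp only [Nat.cast_id]
  rw [← Finset.card_image_of_injOn (f := ω), ← Set.ncard_coe_finset]
  · congr 1
    ext w
    simp only [Finset.coe_image, Finset.coe_filter, Finset.mem_univ, true_and, Set.mem_image,
      Set.mem_ofPred_eq, Set.mem_inter_iff, Set.mem_iInter]
    constructor
    · intro hw
      obtain ⟨i, hi⟩ := hw.1
      have hne : (Finset.univ.filter (fun j => ω j = w)).Nonempty := ⟨i, by simp [hi]⟩
      set i0 := (Finset.univ.filter (fun j => ω j = w)).min' hne with hi0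
      have h0 : ω i0 = w := (Finset.mem_filter.1 (Finset.min'_mem _ hne)).2
      refine ⟨i0, ⟨by rwa [h0], fun j hj e => ?_⟩, h0⟩
      have := Finset.min'_le (Finset.univ.filter (fun j => ω j = w)) j (by simp [e, h0])
      exact absurd hj (not_lt.2 this)
    · rintro ⟨i, ⟨h, -⟩, rfl⟩
      exact h
  · intro i hi j hj e
    simp only [Finset.coe_filter, Finset.mem_univ, true_and, Set.mem_ofPred_eq, Set.mem_inter_iff,
      Set.mem_iInter] at hi hj
    rcases lt_trichotomy i j with h | h | h
    · exact absurd e (hj.2 i h)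
    · exact h
    · exact absurd e.symm (hi.2 j h)

theorem measurable_ncard_vert (n : ℕ) :
    Measurable fun ω : Fin n → ℝ × ℝ => (vert (Set.range ω)).ncard := by
  simp_rw [ncard_vert_eq]
  apply Finset.measurable_sum
  intro i _
  apply measurable_const.indicator
  apply (measurableSet_mem_vert i).inter
  apply MeasurableSet.iInter
  intro j
  apply MeasurableSet.iInter
  intro _
  exact (measurableSet_eq_fun (measurable_pi_apply j) (measurable_pi_apply i)).compl

theorem measurable_nv {ι : Type} [Fintype ι] (a b : ℝ × ℝ) :
    Measurable fun ω : ι → ℝ × ℝ => nv a b (Set.range ω) := by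
  set e := Fintype.equivFin ι
  have h2 : Measurable fun ω : ι → ℝ × ℝ =>
      (Fin.cons a (Fin.cons b (fun k => ω (e.symm k))) : Fin (Fintype.card ι + 1 + 1) → ℝ × ℝ) := by
    rw [measurable_pi_iff]
    intro k
    refine Fin.cases ?_ (fun k => ?_) k
    · simp
    · refine Fin.cases ?_ (fun k => ?_) k
      · simp
      · simp only [Fin.cons_succ]
        exact measurable_pi_apply _
  have h3 := (measurable_ncard_vert _).comp h2
  have h4 : ∀ ω : ι → ℝ × ℝ, nv a b (Set.range ω) = (vert (Set.range
      (Fin.cons a (Fin.cons b (fun k => ω (e.symm k))) : Fin (Fintype.card ι + 1 + 1) → ℝ × ℝ))).ncard - 2 := by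
    intro ω
    rw [nv, Fin.range_cons, Fin.range_cons]
    have : Set.range (fun k => ω (e.symm k)) = Set.range ω := e.symm.surjective.range_comp ω
    rw [this]
    congr 3
    ext w
    simp only [Set.mem_union, Set.mem_insert_iff, Set.mem_singleton_iff]
    tauto
  simp_rw [h4]
  exact (measurable_from_top (f := fun k : ℕ => k - 2)).comp h3

theorem measurableSet_T : MeasurableSet T := by
  have : T = {X : ℝ × ℝ | 0 ≤ X.1} ∩ ({X : ℝ × ℝ | 0 ≤ X.2} ∩ {X : ℝ × ℝ | X.1 + X.2 ≤ 1}) := by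
    ext X
    exact mem_T_iff X
  rw [this]
  apply MeasurableSet.inter
  · exact measurableSet_le measurable_const measurable_fst
  · apply MeasurableSet.inter
    · exact measurableSet_le measurable_const measurable_snd
    · exact measurableSet_le (measurable_fst.add measurable_snd) measurable_const

instance sigmaFinite_muT : SigmaFinite μT := by
  unfold μT
  have : IsFiniteMeasure (volume.restrict T) := by
    refine ⟨?_⟩
    rw [Measure.restrict_apply_univ]
    have : Bornology.IsBounded T := by
      unfold T
      rw [isBounded_convexHull]
      exact Set.Finite.isBounded (by simp)
    exact this.measure_lt_top
  have : IsFiniteMeasure ((2 : ENNReal) • (volume.restrict T)) :=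
    Measure.smul_finite _ (by simp)
  infer_instance

theorem lintegral_scale (a : ℝ) (ha : 0 < a) (g : ℝ → ENNReal) (hg : Measurable g) :
    ∫⁻ y, g y = ENNReal.ofReal a * ∫⁻ y, g (a * y) := by
  have h := Real.map_volume_mul_left ha.ne'
  have h2 : ∫⁻ y, g (a * y) = ∫⁻ y, g y ∂(Measure.map (a * ·) volume) := by
    rw [lintegral_map hg (measurable_const_mul a)]
  rw [h2, h, lintegral_smul_measure, smul_eq_mul, ← mul_assoc, ← ENNReal.ofReal_mul ha.le,
    abs_of_pos (inv_pos.2 ha), mul_inv_cancel₀ ha.ne']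
  simp

theorem lintegral_muT (g : ℝ × ℝ → ENNReal) (hg : Measurable g) :
    ∫⁻ X, g X ∂μT = ∫⁻ x in Set.Ioo (0:ℝ) 1, ENNReal.ofReal (2 * (1 - x)) *
      ∫⁻ t in Set.Ioo (0:ℝ) 1, g (x, (1 - x) * t) := by
  have hgi : Measurable (T.indicator g) := hg.indicator measurableSet_T
  rw [μT, lintegral_smul_measure, ← lintegral_indicator measurableSet_T, Measure.volume_eq_prod,
    lintegral_prod _ hgi.aemeasurable, smul_eq_mul, ← lintegral_const_mul,
    ← lintegral_indicator measurableSet_Ioo]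
  swap
  · exact hgi.lintegral_prod_right'
  have h01 : ∀ᵐ x : ℝ, x ≠ 0 := Measure.ae_ne volume 0
  have h02 : ∀ᵐ x : ℝ, x ≠ 1 := Measure.ae_ne volume 1
  apply lintegral_congr_ae
  filter_upwards [h01, h02] with x hx0 hx1
  by_cases hx : x ∈ Set.Ioo (0:ℝ) 1
  · rw [Set.indicator_of_mem hx]
    have hx' : 0 < 1 - x := by linarith [hx.2]
    rw [lintegral_scale (1 - x) hx' (fun y => T.indicator g (x, y)) (hgi.comp (by fun_prop)),
      ← mul_assoc, ENNReal.ofReal_mul (by norm_num)]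
    rw [← lintegral_indicator measurableSet_Ioo]
    congr 1
    · simp
    apply lintegral_congr_ae
    filter_upwards [h01, h02] with t ht0 ht1
    have hT : (x, (1 - x) * t) ∈ T ↔ t ∈ Set.Ioo (0:ℝ) 1 := by
      rw [mem_T_iff]
      constructor
      · rintro ⟨_, h2, h3⟩
        refine ⟨lt_of_le_of_ne ?_ (Ne.symm ht0), lt_of_le_of_ne ?_ ht1⟩
        · exact nonneg_of_mul_nonneg_right h2 hx'
        · simp only at h3
          by_contra hc
          push Not at hc
          nlinarith
      · rintro ⟨h2, h3⟩
        refine ⟨hx.1.le, by positivity, ?_⟩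
        simp only
        nlinarith
    by_cases h : t ∈ Set.Ioo (0:ℝ) 1
    · rw [Set.indicator_of_mem h, Set.indicator_of_mem (hT.2 h)]
    · rw [Set.indicator_of_notMem h, Set.indicator_of_notMem (fun h' => h (hT.1 h'))]
  · rw [Set.indicator_of_notMem hx]
    have : ∀ y, T.indicator g (x, y) = 0 := by
      intro y
      apply Set.indicator_of_notMem
      intro h
      obtain ⟨h1, h2, h3⟩ := (mem_T_iff _).1 h
      simp only at h1 h2 h3
      exact hx ⟨lt_of_le_of_ne h1 (Ne.symm hx0), lt_of_le_of_ne (by linarith) hx1⟩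
    simp [this]

theorem lintegral_Ioo_ofReal (f : ℝ → ℝ) (hf : Continuous f) (h0 : ∀ x ∈ Set.Ioo (0:ℝ) 1, 0 ≤ f x) :
    ∫⁻ x in Set.Ioo (0:ℝ) 1, ENNReal.ofReal (f x) = ENNReal.ofReal (∫ x in (0:ℝ)..1, f x) := by
  rw [intervalIntegral.integral_of_le zero_le_one, integral_Ioc_eq_integral_Ioo,
    ofReal_integral_eq_lintegral_ofReal]
  · exact (hf.integrableOn_Icc (a := 0) (b := 1)).mono_set Set.Ioo_subset_Icc_self
  · filter_upwards [ae_restrict_mem measurableSet_Ioo] with x hx using h0 x hx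

instance isProb_muT : IsProbabilityMeasure μT := by
  refine ⟨?_⟩
  rw [← lintegral_one, lintegral_muT _ measurable_const]
  simp only [lintegral_const, Measure.restrict_apply_univ, Real.volume_Ioo]
  simp only [sub_zero, ENNReal.ofReal_one, mul_one]
  rw [lintegral_Ioo_ofReal _ (by fun_prop)]
  · have : ∫ x in (0:ℝ)..1, 2 * (1 - x) = 1 := by
      rw [intervalIntegral.integral_const_mul, intervalIntegral.integral_sub (by simp) (by simp)]
      simp
      norm_num
    rw [this]; simp
  · intro x hx
    linarith [hx.2]

/-- A general affine map of the plane. -/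
def aff (M : Matrix (Fin 2) (Fin 2) ℝ) (t : ℝ × ℝ) : (ℝ × ℝ) →ᵃ[ℝ] (ℝ × ℝ) :=
  (Matrix.toLin (Module.Basis.finTwoProd ℝ) (Module.Basis.finTwoProd ℝ) M).toAffineMap +
    AffineMap.const ℝ _ t

theorem aff_apply (a b c d : ℝ) (t X : ℝ × ℝ) :
    aff !![a, b; c, d] t X = (a * X.1 + b * X.2 + t.1, c * X.1 + d * X.2 + t.2) := by
  simp [aff, Matrix.toLin_finTwoProd_apply]
  rfl

theorem continuous_aff (M : Matrix (Fin 2) (Fin 2) ℝ) (t : ℝ × ℝ) : Continuous (aff M t) :=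
  AffineMap.continuous_of_finiteDimensional _

theorem aff_injective (M : Matrix (Fin 2) (Fin 2) ℝ) (hM : M.det ≠ 0) (t : ℝ × ℝ) :
    Function.Injective (aff M t) := by
  have h : Function.Injective (Matrix.toLin (Module.Basis.finTwoProd ℝ) (Module.Basis.finTwoProd ℝ) M) := by
    have : IsUnit (LinearMap.det (Matrix.toLin (Module.Basis.finTwoProd ℝ) (Module.Basis.finTwoProd ℝ) M)) := by
      rw [LinearMap.det_toLin]
      exact isUnit_iff_ne_zero.2 hM
    exact ((Module.End.isUnit_iff _).1 ((LinearMap.isUnit_iff_isUnit_det _).2 this)).1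
  intro X Y hXY
  apply h
  simpa [aff] using hXY

theorem map_aff_volume (M : Matrix (Fin 2) (Fin 2) ℝ) (hM : M.det ≠ 0) (t : ℝ × ℝ) :
    Measure.map (aff M t) volume = ENNReal.ofReal |M.det⁻¹| • (volume : Measure (ℝ × ℝ)) := by
  set L := Matrix.toLin (Module.Basis.finTwoProd ℝ) (Module.Basis.finTwoProd ℝ) M with hL
  have hdet : LinearMap.det L = M.det := LinearMap.det_toLin _ _
  have h1 := Measure.map_linearMap_addHaar_eq_smul_addHaar (volume : Measure (ℝ × ℝ)) (f := L)
    (by rwa [hdet])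
  have h2 : (aff M t : ℝ × ℝ → ℝ × ℝ) = (fun X => X + t) ∘ L := by
    ext X <;> simp [aff, hL]
  have hLm : Measurable L := (LinearMap.continuous_of_finiteDimensional L).measurable
  rw [h2, ← Measure.map_map (measurable_add_const t) hLm, h1, Measure.map_smul, hdet,
    map_add_right_eq_self]

theorem restrict_image_T (M : Matrix (Fin 2) (Fin 2) ℝ) (hM : M.det ≠ 0) (t : ℝ × ℝ)
    (hT : aff M t '' T ⊆ T) :
    μT.restrict (aff M t '' T) = ENNReal.ofReal |M.det| • Measure.map (aff M t) μT := by
  have hinj := aff_injective M hM t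
  have hemb : MeasurableEmbedding (aff M t) := (continuous_aff M t).measurableEmbedding hinj
  have h1 := hemb.restrict_map volume (aff M t '' T)
  rw [Set.preimage_image_eq _ hinj, map_aff_volume M hM] at h1
  rw [μT, Measure.map_smul, ← h1, Measure.restrict_smul, Measure.restrict_smul,
    Measure.restrict_restrict (hemb.measurableSet_image.2 measurableSet_T),
    Set.inter_eq_left.2 hT, smul_comm (ENNReal.ofReal |M.det|), smul_smul (ENNReal.ofReal |M.det|),
    ← ENNReal.ofReal_mul (abs_nonneg _), ← abs_mul, mul_inv_cancel₀ hM]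
  simp

/-- Law of i.i.d. points indexed by a finite type. -/
def PI (ι : Type) [Fintype ι] : Measure (ι → ℝ × ℝ) := Measure.pi fun _ => μT

instance isProb_PI (ι : Type) [Fintype ι] : IsProbabilityMeasure (PI ι) := by
  unfold PI; infer_instance

theorem setLIntegral_pi_image {ι : Type} [Fintype ι] (M : Matrix (Fin 2) (Fin 2) ℝ)
    (hM : M.det ≠ 0) (t : ℝ × ℝ) (hT : aff M t '' T ⊆ T) (Φ : (ι → ℝ × ℝ) → ENNReal)
    (hΦ : Measurable Φ) :
    ∫⁻ ω in Set.univ.pi (fun _ : ι => aff M t '' T), Φ ω ∂(PI ι) =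
      ENNReal.ofReal |M.det| ^ Fintype.card ι * ∫⁻ ω, Φ (fun i => aff M t (ω i)) ∂(PI ι) := by
  have hmeas := (continuous_aff M t).measurable
  have hprob : IsProbabilityMeasure (Measure.map (aff M t) μT) :=
    Measure.isProbabilityMeasure_map hmeas.aemeasurable
  have h1 : (PI ι).restrict (Set.univ.pi (fun _ : ι => aff M t '' T)) =
      ENNReal.ofReal |M.det| ^ Fintype.card ι •
        Measure.map (fun ω i => aff M t (ω i)) (PI ι) := by
    rw [PI, Measure.restrict_pi_pi, Measure.pi_map_pi (fun _ => hmeas.aemeasurable)]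
    refine Measure.pi_eq ?_
    intro s hs
    rw [Measure.smul_apply, Measure.pi_pi, smul_eq_mul]
    simp_rw [restrict_image_T M hM t hT, Measure.smul_apply, smul_eq_mul, Finset.prod_mul_distrib]
    simp
  rw [h1, lintegral_smul_measure, smul_eq_mul, lintegral_map hΦ]
  rw [measurable_pi_iff]
  intro i
  exact hmeas.comp (measurable_pi_apply i)

theorem ae_muT_mem : ∀ᵐ X ∂μT, X ∈ T := by
  unfold μT
  apply Measure.ae_smul_measure
  exact ae_restrict_mem measurableSet_T

theorem ae_muT_of_volume {p : ℝ × ℝ → Prop} (h : ∀ᵐ X, p X) : ∀ᵐ X ∂μT, p X := by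
  unfold μT
  apply Measure.ae_smul_measure
  exact ae_restrict_of_ae h

theorem ae_muT_pos : ∀ᵐ X ∂μT, 0 < X.2 := by
  have h : ∀ᵐ X : ℝ × ℝ, X.2 ≠ 0 :=
    Measure.quasiMeasurePreserving_snd.ae (Measure.ae_ne volume (0:ℝ))
  filter_upwards [ae_muT_mem, ae_muT_of_volume h] with X hX h
  exact lt_of_le_of_ne ((mem_T_iff X).1 hX).2.1 (Ne.symm h)

theorem ae_muT_lt : ∀ᵐ X ∂μT, X.1 < 1 := by
  filter_upwards [ae_muT_mem, ae_muT_pos] with X hX h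
  linarith [((mem_T_iff X).1 hX).2.2]

theorem ae_muT_no_tie (a b : ℝ) (ha : a < 1) : ∀ᵐ X ∂μT, X.2 * (1 - a) ≠ b * (1 - X.1) := by
  apply ae_muT_of_volume
  rw [ae_iff, Measure.volume_eq_prod, Measure.measure_prod_null]
  · filter_upwards with x
    have : Prod.mk x ⁻¹' {X : ℝ × ℝ | ¬ X.2 * (1 - a) ≠ b * (1 - X.1)} ⊆ {b * (1 - x) / (1 - a)} := by
      intro y hy
      simp only [ne_eq, not_not, Set.mem_preimage, Set.mem_ofPred_eq] at hy
      rw [Set.mem_singleton_iff, eq_div_iff (by linarith)]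
      exact hy
    exact measure_mono_null this (by simp)
  · simp only [ne_eq, not_not]
    apply measurableSet_eq_fun <;> fun_prop

theorem lintegral_PI_equiv {ι κ : Type} [Fintype ι] [Fintype κ] (e : ι ≃ κ) (f : ℕ → ENNReal)
    (a b : ℝ × ℝ) :
    ∫⁻ u, f (nv a b (Set.range u)) ∂(PI ι) = ∫⁻ u, f (nv a b (Set.range u)) ∂(PI κ) := by
  have h := measurePreserving_piCongrLeft (α := fun _ : κ => ℝ × ℝ) (fun _ => μT) e
  have h2 := h.lintegral_comp_emb (MeasurableEquiv.measurableEmbedding _)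
    (fun u => f (nv a b (Set.range u)))
  unfold PI
  rw [← h2]
  congr 1
  ext u
  have : Set.range (MeasurableEquiv.piCongrLeft (fun _ : κ => ℝ × ℝ) e u) = Set.range u := by
    have h3 : ∀ i, MeasurableEquiv.piCongrLeft (fun _ : κ => ℝ × ℝ) e u (e i) = u i := by
      intro i
      exact Equiv.piCongrLeft_apply_apply (fun _ : κ => ℝ × ℝ) e u i
    rw [← e.surjective.range_comp]
    congr 1
    ext1 i
    exact h3 i
  rw [this]

theorem measurable_f_nv {ι : Type} [Fintype ι] (f : ℕ → ENNReal) (a b : ℝ × ℝ) :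
    Measurable fun ω : ι → ℝ × ℝ => f (nv a b (Set.range ω)) :=
  (measurable_from_top (f := f)).comp (measurable_nv a b)

theorem ae_PI {ι : Type} [Fintype ι] {p : ℝ × ℝ → Prop} (h : ∀ᵐ X ∂μT, p X) :
    ∀ᵐ ω ∂(PI ι), ∀ i, p (ω i) := by
  rw [ae_all_iff]
  intro i
  exact (Measure.quasiMeasurePreserving_eval (fun _ : ι => μT) i).ae h

theorem measurableSet_Rg (x : ℝ) : MeasurableSet (Rg x) := by
  have : Rg x = {X : ℝ × ℝ | 0 ≤ X.1} ∩ ({X : ℝ × ℝ | 0 ≤ X.2} ∩ {X : ℝ × ℝ | X.1 + x * X.2 ≤ x}) := by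
    ext X
    exact Iff.rfl
  rw [this]
  apply MeasurableSet.inter
  · exact measurableSet_le measurable_const measurable_fst
  · apply MeasurableSet.inter
    · exact measurableSet_le measurable_const measurable_snd
    · exact measurableSet_le (by fun_prop) measurable_const

theorem Rg_eq_image {x : ℝ} (hx : 0 < x) : aff !![x, 0; 0, 1] (0, 0) '' T = Rg x := by
  ext X
  constructor
  · rintro ⟨Y, hY, rfl⟩
    rw [mem_T_iff] at hY
    rw [aff_apply]
    refine ⟨?_, ?_, ?_⟩
    · simp only; nlinarith
    · simp only; nlinarith
    · simp only; nlinarith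
  · rintro ⟨h1, h2, h3⟩
    refine ⟨(X.1 / x, X.2), ?_, ?_⟩
    · rw [mem_T_iff]
      refine ⟨by positivity, h2, ?_⟩
      simp only
      rw [div_add' _ _ _ hx.ne', div_le_one hx]
      linarith
    · rw [aff_apply]
      ext
      · simp only; field_simp; ring
      · simp

theorem Rg_subset_T {x : ℝ} (hx : 0 < x) (hx1 : x < 1) : Rg x ⊆ T := by
  rintro X ⟨h1, h2, h3⟩
  rw [mem_T_iff]
  refine ⟨h1, h2, ?_⟩
  by_contra hc
  push Not at hc
  nlinarith

theorem muT_Rg {x : ℝ} (hx : 0 < x) (hx1 : x < 1) : μT (Rg x) = ENNReal.ofReal x := by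
  have h := restrict_image_T !![x, 0; 0, 1] (by simp [hx.ne']) (0, 0)
    (by rw [Rg_eq_image hx]; exact Rg_subset_T hx hx1)
  rw [Rg_eq_image hx] at h
  have hprob : IsProbabilityMeasure (Measure.map (aff !![x, 0; 0, 1] (0, 0)) μT) :=
    Measure.isProbabilityMeasure_map (continuous_aff _ _).measurable.aemeasurable
  have h2 := congrArg (fun m => m Set.univ) h
  simp only [Measure.restrict_apply_univ, Measure.smul_apply, measure_univ, smul_eq_mul] at h2
  rw [h2]
  simp [abs_of_pos hx]

theorem muT_Rg_compl {x : ℝ} (hx : 0 < x) (hx1 : x < 1) : μT (Rg x)ᶜ = ENNReal.ofReal (1 - x) := by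
  rw [prob_compl_eq_one_sub (measurableSet_Rg x), muT_Rg hx hx1, ENNReal.ofReal_sub _ hx.le]
  simp

/-- The expectation of `f (N_k + 1)`. -/
def Lf (f : ℕ → ENNReal) (k : ℕ) : ENNReal := ∫⁻ ω, f (N k ω) ∂P k

theorem Lf_eq_of_card {ι : Type} [Fintype ι] (f : ℕ → ENNReal) :
    ∫⁻ u, f (nv (1, 0) (0, 1) (Set.range u)) ∂(PI ι) = Lf f (Fintype.card ι) := by
  rw [lintegral_PI_equiv (Fintype.equivFin ι), Lf]
  simp_rw [N_eq_nv]
  rfl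

theorem lintegral_cyl {n : ℕ} {x : ℝ} (hx : 0 < x) (hx1 : x < 1) (f : ℕ → ENNReal)
    (S : Finset (Fin n)) :
    ∫⁻ ω, ({ω : Fin n → ℝ × ℝ | ∀ i, i ∈ S ↔ ω i ∈ Rg x}).indicator
      (fun ω => f (nv (x, 0) (0, 1) (ω '' S))) ω ∂(P n) =
      ENNReal.ofReal x ^ S.card * ENNReal.ofReal (1 - x) ^ (n - S.card) * Lf f S.card := by
  classical
  have h := measurePreserving_piEquivPiSubtypeProd (α := fun _ : Fin n => ℝ × ℝ) (fun _ => μT)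
    (fun i => i ∈ S)
  set F : ({i // i ∈ S} → ℝ × ℝ) → ENNReal := (Set.univ.pi (fun _ : {i // i ∈ S} => Rg x)).indicator
    (fun u => f (nv (x, 0) (0, 1) (Set.range u))) with hF
  set F' : ({i // ¬ i ∈ S} → ℝ × ℝ) → ENNReal :=
    (Set.univ.pi (fun _ : {i // ¬ i ∈ S} => (Rg x)ᶜ)).indicator (fun u => 1) with hF'
  have hm1 : MeasurableSet (Set.univ.pi (fun _ : {i // i ∈ S} => Rg x)) :=
    MeasurableSet.univ_pi (fun _ => measurableSet_Rg x)
  have hm2 : MeasurableSet (Set.univ.pi (fun _ : {i // ¬ i ∈ S} => (Rg x)ᶜ)) :=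
    MeasurableSet.univ_pi (fun _ => (measurableSet_Rg x).compl)
  have h2 := h.lintegral_comp_emb (MeasurableEquiv.measurableEmbedding _)
    (fun p => F p.1 * F' p.2)
  have hFm : Measurable F := (measurable_f_nv f _ _).indicator hm1
  have hFm' : Measurable F' := measurable_const.indicator hm2
  have h3 : ∀ ω : Fin n → ℝ × ℝ, ({ω : Fin n → ℝ × ℝ | ∀ i, i ∈ S ↔ ω i ∈ Rg x}).indicator
      (fun ω => f (nv (x, 0) (0, 1) (ω '' S))) ω =
      F (MeasurableEquiv.piEquivPiSubtypeProd (fun _ : Fin n => ℝ × ℝ) (fun i => i ∈ S) ω).1 *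
      F' (MeasurableEquiv.piEquivPiSubtypeProd (fun _ : Fin n => ℝ × ℝ) (fun i => i ∈ S) ω).2 := by
    intro ω
    have e1 : (MeasurableEquiv.piEquivPiSubtypeProd (fun _ : Fin n => ℝ × ℝ) (fun i => i ∈ S) ω).1 =
      fun i : {i // i ∈ S} => ω i.1 := rfl
    have e2 : (MeasurableEquiv.piEquivPiSubtypeProd (fun _ : Fin n => ℝ × ℝ) (fun i => i ∈ S) ω).2 =
      fun i : {i // ¬ i ∈ S} => ω i.1 := rfl
    rw [e1, e2]
    have e3 : Set.range (fun i : {i // i ∈ S} => ω i) = ω '' S := by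
      ext w; simp
    simp only [hF, hF', Set.indicator_apply, Set.mem_pi, Set.mem_univ, forall_true_left, e3,
      Set.mem_ofPred_eq, Subtype.forall, Set.mem_compl_iff]
    by_cases hA : ∀ i ∈ S, ω i ∈ Rg x
    · by_cases hB : ∀ i, i ∉ S → ω i ∉ Rg x
      · rw [if_pos hA, if_pos hB, mul_one, if_pos]
        intro i
        exact ⟨hA i, fun h => by_contra fun h' => hB i h' h⟩
      · rw [if_neg hB, mul_zero, if_neg]
        intro hC
        exact hB fun i hi h => hi ((hC i).2 h)
    · rw [if_neg hA, zero_mul, if_neg]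
      intro hC
      exact hA fun i hi => (hC i).1 hi
  unfold P
  rw [lintegral_congr h3, h2, lintegral_prod_mul hFm.aemeasurable hFm'.aemeasurable]
  have h4 : ∫⁻ u, F u ∂(Measure.pi fun _ : {i // i ∈ S} => μT) =
      ENNReal.ofReal x ^ S.card * Lf f S.card := by
    have hdet : (!![x, 0; 0, 1] : Matrix (Fin 2) (Fin 2) ℝ).det = x := by simp
    have h5 := setLIntegral_pi_image (ι := {i // i ∈ S}) !![x, 0; 0, 1] (by rw [hdet]; exact hx.ne')
      (0, 0) (by rw [Rg_eq_image hx]; exact Rg_subset_T hx hx1)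
      (fun u => f (nv (x, 0) (0, 1) (Set.range u))) (measurable_f_nv f _ _)
    rw [Rg_eq_image hx, hdet, abs_of_pos hx, Fintype.card_coe] at h5
    rw [hF, lintegral_indicator hm1]
    refine h5.trans ?_
    congr 1
    rw [← Fintype.card_coe S, ← Lf_eq_of_card]
    congr 1
    ext u
    have e1 : Set.range (fun i => aff !![x, 0; 0, 1] (0, 0) (u i)) =
      aff !![x, 0; 0, 1] (0, 0) '' Set.range u := Set.range_comp _ _
    have e2 : aff !![x, 0; 0, 1] (0, 0) (1, 0) = (x, 0) := by rw [aff_apply]; simp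
    have e3 : aff !![x, 0; 0, 1] (0, 0) (0, 1) = (0, 1) := by rw [aff_apply]; simp
    have e4 := nv_image _ (aff_injective !![x, 0; 0, 1] (by rw [hdet]; exact hx.ne') (0, 0)) (1, 0) (0, 1)
      (Set.range u)
    rw [e2, e3] at e4
    rw [e1, e4]
  have h6 : ∫⁻ u, F' u ∂(Measure.pi fun _ : {i // ¬ i ∈ S} => μT) =
      ENNReal.ofReal (1 - x) ^ (n - S.card) := by
    rw [hF', lintegral_indicator hm2, lintegral_const, one_mul, Measure.restrict_apply_univ,
      Measure.pi_pi]
    rw [muT_Rg_compl hx hx1, Finset.prod_const, Finset.card_univ, Fintype.card_subtype_compl,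
      Fintype.card_fin, Fintype.card_coe]
  trans (ENNReal.ofReal x ^ S.card * Lf f S.card) * ENNReal.ofReal (1 - x) ^ (n - S.card)
  · congr 1
    convert h4
  · ring

/-- Expectation of `f` of the number of vertices when an additional point `(x,0)` is added. -/
def Kf (f : ℕ → ENNReal) (n : ℕ) (x : ℝ) : ENNReal :=
  ∫⁻ ω, f (nv (1, 0) (0, 1) (insert (x, 0) (Set.range ω))) ∂P n

theorem Kf_eq {n : ℕ} {x : ℝ} (hx : 0 < x) (hx1 : x < 1) (f : ℕ → ENNReal) :
    Kf f n x = ∑ k ∈ Finset.range (n + 1), (n.choose k : ENNReal) *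
      (ENNReal.ofReal x ^ k * ENNReal.ofReal (1 - x) ^ (n - k) * Lf (fun k => f (k + 1)) k) := by
  classical
  have h1 : Kf f n x = ∫⁻ ω, ∑ S ∈ (Finset.univ : Finset (Fin n)).powerset,
      ({ω : Fin n → ℝ × ℝ | ∀ i, i ∈ S ↔ ω i ∈ Rg x}).indicator
      (fun ω => f (nv (x, 0) (0, 1) (ω '' S) + 1)) ω ∂(P n) := by
    apply lintegral_congr_ae
    have ha : ∀ᵐ ω ∂(P n), ∀ i, ω i ∈ T := ae_PI ae_muT_mem
    have hb : ∀ᵐ ω ∂(P n), ∀ i, 0 < (ω i).2 := ae_PI ae_muT_pos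
    filter_upwards [ha, hb] with ω ha hb
    rw [nv_peel hx hx1 (Set.finite_range ω) (by rintro _ ⟨i, rfl⟩; exact ha i)
      (by rintro _ ⟨i, rfl⟩; exact hb i)]
    rw [Finset.sum_eq_single (Finset.univ.filter (fun i => ω i ∈ Rg x))]
    · rw [Set.indicator_of_mem]
      · congr 3
        ext w
        simp only [Set.mem_inter_iff, Set.mem_range, Finset.coe_filter, Finset.mem_univ, true_and,
          Set.mem_image, Set.mem_ofPred_eq]
        constructor
        · rintro ⟨⟨i, rfl⟩, h⟩
          exact ⟨i, h, rfl⟩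
        · rintro ⟨i, h, rfl⟩
          exact ⟨⟨i, rfl⟩, h⟩
      · simp
    · intro S _ hS
      apply Set.indicator_of_notMem
      intro h
      apply hS
      ext i
      simp [h i]
    · simp
  have hcm : ∀ S : Finset (Fin n), MeasurableSet {ω : Fin n → ℝ × ℝ | ∀ i, i ∈ S ↔ ω i ∈ Rg x} := by
    intro S
    have : {ω : Fin n → ℝ × ℝ | ∀ i, i ∈ S ↔ ω i ∈ Rg x} =
        Set.univ.pi (fun i => if i ∈ S then Rg x else (Rg x)ᶜ) := by
      ext ω
      simp only [Set.mem_ofPred_eq, Set.mem_pi, Set.mem_univ, forall_true_left]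
      refine forall_congr' fun i => ?_
      by_cases hi : i ∈ S <;> simp [hi]
    rw [this]
    apply MeasurableSet.univ_pi
    intro i
    split_ifs
    · exact measurableSet_Rg x
    · exact (measurableSet_Rg x).compl
  rw [h1, lintegral_finsetSum]
  · simp_rw [lintegral_cyl hx hx1 (fun k => f (k + 1))]
    rw [Finset.sum_powerset_apply_card (fun k => ENNReal.ofReal x ^ k *
      ENNReal.ofReal (1 - x) ^ (n - k) * Lf (fun k => f (k + 1)) k)]
    simp [nsmul_eq_mul]
  · intro S _
    refine Measurable.indicator ?_ (hcm S)
    have : Measurable fun ω : Fin n → ℝ × ℝ => (fun i : S => ω i) := by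
      rw [measurable_pi_iff]
      intro i
      exact measurable_pi_apply _
    have h5 := (measurable_f_nv (ι := S) (fun k => f (k + 1)) (x, 0) (0, 1)).comp this
    convert h5 using 2 with ω
    simp only [Function.comp]
    congr 3
    ext w; simp

theorem measurable_insert_nv (f : ℕ → ENNReal) (n : ℕ) :
    Measurable fun p : (ℝ × ℝ) × (Fin n → ℝ × ℝ) =>
      f (nv (1, 0) (0, 1) (insert p.1 (Set.range p.2))) := by
  have h : Measurable fun p : (ℝ × ℝ) × (Fin n → ℝ × ℝ) =>
      (Fin.cons p.1 p.2 : Fin (n + 1) → ℝ × ℝ) := by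
    rw [measurable_pi_iff]
    intro k
    refine Fin.cases ?_ (fun k => ?_) k
    · simpa using measurable_fst
    · simp only [Fin.cons_succ]
      exact (measurable_pi_apply k).comp measurable_snd
  have h2 := (measurable_f_nv (ι := Fin (n + 1)) f (1, 0) (0, 1)).comp h
  simpa [Function.comp_def, Fin.range_cons] using h2

instance isProb_P (n : ℕ) : IsProbabilityMeasure (P n) := isProb_PI (Fin n)

theorem measurable_Kf (f : ℕ → ENNReal) (n : ℕ) : Measurable (Kf f n) := by
  unfold Kf
  have hm : Measurable fun p : ℝ × (Fin n → ℝ × ℝ) => (((p.1, 0) : ℝ × ℝ), p.2) := by fun_prop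
  have h : Measurable fun p : ℝ × (Fin n → ℝ × ℝ) =>
      f (nv (1, 0) (0, 1) (insert (p.1, 0) (Set.range p.2))) := by
    have h2 := (measurable_insert_nv f n).comp hm
    simp only [Function.comp_def] at h2
    exact h2
  exact h.lintegral_prod_right'

theorem mem_shear_image {t : ℝ} (ht1 : t < 1) {Y : ℝ × ℝ} (hY : Y ∈ T) :
    Y ∈ aff !![1, 0; -t, 1 - t] (0, t) '' T ↔ t * (1 - Y.1) ≤ Y.2 := by
  rw [mem_T_iff] at hY
  constructor
  · rintro ⟨Z, hZ, rfl⟩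
    rw [mem_T_iff] at hZ
    rw [aff_apply]
    simp only
    nlinarith
  · intro h
    have h1 : 0 < 1 - t := by linarith
    refine ⟨(Y.1, (Y.2 - t * (1 - Y.1)) / (1 - t)), ?_, ?_⟩
    · rw [mem_T_iff]
      refine ⟨hY.1, div_nonneg (by linarith) h1.le, ?_⟩
      simp only
      rw [← le_sub_iff_add_le', div_le_iff₀ h1]
      nlinarith
    · rw [aff_apply]
      ext
      · simp
      · simp only
        field_simp
        ring

theorem shear_image_subset {t : ℝ} (ht0 : 0 ≤ t) (ht1 : t < 1) :
    aff !![1, 0; -t, 1 - t] (0, t) '' T ⊆ T := by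
  rintro _ ⟨Z, hZ, rfl⟩
  rw [mem_T_iff] at hZ
  rw [aff_apply, mem_T_iff]
  obtain ⟨h1, h2, h3⟩ := hZ
  simp only
  refine ⟨by linarith, ?_, ?_⟩ <;> nlinarith

theorem inner_integral (f : ℕ → ENNReal) (n : ℕ) (X : ℝ × ℝ) (hX : X ∈ T) (hX1 : X.1 < 1)
    (hX2 : X.2 < 1 - X.1) :
    ∫⁻ ω, ({ω : Fin n → ℝ × ℝ | ∀ i, X.2 * (1 - (ω i).1) ≤ (ω i).2 * (1 - X.1)}).indicator
      (fun ω => f (nv (1, 0) (0, 1) (insert X (Set.range ω)))) ω ∂(P n) =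
    ENNReal.ofReal (1 - X.2 / (1 - X.1)) ^ n * Kf f n X.1 := by
  have h1X : 0 < 1 - X.1 := by linarith
  obtain ⟨t, ht⟩ : ∃ t : ℝ, t = X.2 / (1 - X.1) := ⟨_, rfl⟩
  rw [← ht]
  have ht0 : 0 ≤ t := ht ▸ div_nonneg ((mem_T_iff X).1 hX).2.1 h1X.le
  have ht1 : t < 1 := by rw [ht, div_lt_one h1X]; exact hX2
  have hXt : X.2 = t * (1 - X.1) := by rw [ht]; field_simp
  have hdet : (!![1, 0; -t, 1 - t] : Matrix (Fin 2) (Fin 2) ℝ).det = 1 - t := by simp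
  have hdet0 : (!![1, 0; -t, 1 - t] : Matrix (Fin 2) (Fin 2) ℝ).det ≠ 0 := by rw [hdet]; linarith
  have hmT : MeasurableSet (aff !![1, 0; -t, 1 - t] (0, t) '' T) :=
    ((continuous_aff _ _).measurableEmbedding (aff_injective _ hdet0 _)).measurableSet_image.2
      measurableSet_T
  have hΦ : Measurable fun ω : Fin n → ℝ × ℝ => f (nv (1, 0) (0, 1) (insert X (Set.range ω))) := by
    have hm : Measurable fun ω : Fin n → ℝ × ℝ => (X, ω) := by fun_prop
    have h2 := (measurable_insert_nv f n).comp hm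
    simp only [Function.comp_def] at h2
    exact h2
  have h5 := setLIntegral_pi_image (ι := Fin n) _ hdet0 (0, t) (shear_image_subset ht0 ht1) _ hΦ
  rw [hdet, abs_of_pos (by linarith), Fintype.card_fin] at h5
  rw [← lintegral_indicator (MeasurableSet.univ_pi fun _ => hmT)] at h5
  trans (∫⁻ ω, (Set.univ.pi fun _ : Fin n => aff !![1, 0; -t, 1 - t] (0, t) '' T).indicator
      (fun ω => f (nv (1, 0) (0, 1) (insert X (Set.range ω)))) ω ∂(PI (Fin n)))
  · apply lintegral_congr_ae
    have ha : ∀ᵐ ω ∂(P n), ∀ i, ω i ∈ T := ae_PI ae_muT_mem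
    filter_upwards [ha] with ω ha
    have hiff : ω ∈ {ω : Fin n → ℝ × ℝ | ∀ i, X.2 * (1 - (ω i).1) ≤ (ω i).2 * (1 - X.1)} ↔
        ω ∈ (Set.univ.pi fun _ : Fin n => aff !![1, 0; -t, 1 - t] (0, t) '' T) := by
      simp only [Set.mem_ofPred_eq, Set.mem_pi, Set.mem_univ, forall_true_left]
      refine forall_congr' fun i => ?_
      rw [mem_shear_image ht1 (ha i), hXt]
      have : t * (1 - X.1) * (1 - (ω i).1) = (t * (1 - (ω i).1)) * (1 - X.1) := by ring
      rw [this]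
      exact mul_le_mul_iff_left₀ h1X
    classical
    simp only [Set.indicator_apply, hiff]
  · rw [h5, Kf]
    congr 1
    apply lintegral_congr
    intro ω
    have e1 : Set.range (fun i => aff !![1, 0; -t, 1 - t] (0, t) (ω i)) =
      aff !![1, 0; -t, 1 - t] (0, t) '' Set.range ω := Set.range_comp _ _
    have e2 : aff !![1, 0; -t, 1 - t] (0, t) (1, 0) = (1, 0) := by rw [aff_apply]; simp
    have e3 : aff !![1, 0; -t, 1 - t] (0, t) (0, 1) = (0, 1) := by rw [aff_apply]; simp
    have e5 : aff !![1, 0; -t, 1 - t] (0, t) (X.1, 0) = X := by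
      rw [aff_apply]
      ext
      · simp
      · simp only; rw [hXt]; ring
    have e4 := nv_image _ (aff_injective _ hdet0 (0, t)) (1, 0) (0, 1) (insert (X.1, 0) (Set.range ω))
    rw [e2, e3, Set.image_insert_eq, e5, ← e1] at e4
    rw [e4]

/-- The event that the `j`-th point has the smallest slope seen from `(1,0)`. -/
def argm (n : ℕ) (j : Fin (n + 1)) : Set (Fin (n + 1) → ℝ × ℝ) :=
  {ω | ∀ i, (ω j).2 * (1 - (ω i).1) ≤ (ω i).2 * (1 - (ω j).1)}

theorem measurableSet_argm (n : ℕ) (j : Fin (n + 1)) : MeasurableSet (argm n j) := by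
  have : argm n j = ⋂ i, {ω : Fin (n + 1) → ℝ × ℝ | (ω j).2 * (1 - (ω i).1) ≤ (ω i).2 * (1 - (ω j).1)} := by
    ext ω
    simp [argm]
  rw [this]
  apply MeasurableSet.iInter
  intro i
  apply measurableSet_le <;> fun_prop

theorem lintegral_one_sub_pow (n : ℕ) :
    ∫⁻ t in Set.Ioo (0:ℝ) 1, ENNReal.ofReal (1 - t) ^ n = ENNReal.ofReal (1 / (n + 1)) := by
  have h : ∀ t ∈ Set.Ioo (0:ℝ) 1, ENNReal.ofReal (1 - t) ^ n = ENNReal.ofReal ((1 - t) ^ n) := by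
    intro t ht
    rw [ENNReal.ofReal_pow (by linarith [ht.2])]
  rw [setLIntegral_congr_fun measurableSet_Ioo h, lintegral_Ioo_ofReal _ (by fun_prop)]
  · congr 1
    have := intervalIntegral.integral_comp_sub_left (a := 0) (b := 1) (fun t : ℝ => t ^ n) 1
    rw [this]
    simp
  · intro x hx
    have : 0 ≤ 1 - x := by linarith [hx.2]
    positivity

theorem lintegral_argm (f : ℕ → ENNReal) (n : ℕ) (j : Fin (n + 1)) :
    ∫⁻ ω, (argm n j).indicator (fun ω => f (N (n + 1) ω)) ω ∂P (n + 1) =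
      ENNReal.ofReal (1 / (n + 1)) *
        ∫⁻ x in Set.Ioo (0:ℝ) 1, ENNReal.ofReal (2 * (1 - x)) * Kf f n x := by
  have h := measurePreserving_piFinSuccAbove (α := fun _ : Fin (n + 1) => ℝ × ℝ) (fun _ => μT) j
  set S : Set ((ℝ × ℝ) × (Fin n → ℝ × ℝ)) :=
    {p | ∀ i, p.1.2 * (1 - (p.2 i).1) ≤ (p.2 i).2 * (1 - p.1.1)} with hS
  have hSm : MeasurableSet S := by
    have : S = ⋂ i, {p : (ℝ × ℝ) × (Fin n → ℝ × ℝ) |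
        p.1.2 * (1 - (p.2 i).1) ≤ (p.2 i).2 * (1 - p.1.1)} := by
      ext ω
      simp [hS]
    rw [this]
    apply MeasurableSet.iInter
    intro i
    apply measurableSet_le <;> fun_prop
  set F : (ℝ × ℝ) × (Fin n → ℝ × ℝ) → ENNReal :=
    S.indicator (fun p => f (nv (1, 0) (0, 1) (insert p.1 (Set.range p.2)))) with hF
  have hFm : Measurable F := (measurable_insert_nv f n).indicator hSm
  have h2 := h.lintegral_comp_emb (MeasurableEquiv.measurableEmbedding _) F
  have h3 : ∀ ω : Fin (n + 1) → ℝ × ℝ, (argm n j).indicator (fun ω => f (N (n + 1) ω)) ω =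
      F (MeasurableEquiv.piFinSuccAbove (fun _ : Fin (n + 1) => ℝ × ℝ) j ω) := by
    intro ω
    have e1 : MeasurableEquiv.piFinSuccAbove (fun _ : Fin (n + 1) => ℝ × ℝ) j ω =
      (ω j, fun i => ω (j.succAbove i)) := rfl
    rw [e1]
    have e2 : ω ∈ argm n j ↔ (ω j, fun i => ω (j.succAbove i)) ∈ S := by
      simp only [argm, hS, Set.mem_ofPred_eq]
      rw [Fin.forall_iff_succAbove j]
      simp
    have e3 : Set.range ω = insert (ω j) (Set.range fun i => ω (j.succAbove i)) := by
      ext w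
      simp only [Set.mem_range, Set.mem_insert_iff]
      rw [Fin.exists_iff_succAbove j]
      rw [eq_comm]
    classical
    simp only [hF, Set.indicator_apply, e2, N_eq_nv, e3]
  unfold P
  rw [lintegral_congr h3, h2, lintegral_prod _ hFm.aemeasurable]
  have h4 : ∫⁻ X, (∫⁻ ω, F (X, ω) ∂(P n)) ∂μT =
      ∫⁻ X, ENNReal.ofReal (1 - X.2 / (1 - X.1)) ^ n * Kf f n X.1 ∂μT := by
    apply lintegral_congr_ae
    filter_upwards [ae_muT_mem, ae_muT_lt, ae_muT_no_tie 0 1 zero_lt_one] with X hX hX1 hX2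
    have hX3 := ((mem_T_iff X).1 hX).2.2
    rw [← inner_integral f n X hX hX1 (lt_of_le_of_ne (by linarith) (by simpa using hX2))]
    rfl
  refine h4.trans ?_
  rw [lintegral_muT]
  · rw [← lintegral_const_mul]
    · apply setLIntegral_congr_fun measurableSet_Ioo
      intro x hx
      have hx1 : 1 - x ≠ 0 := by linarith [hx.2]
      simp only
      simp_rw [mul_div_cancel_left₀ _ hx1]
      rw [lintegral_mul_const, lintegral_one_sub_pow]
      · ring
      · fun_prop
    · exact Measurable.mul (by fun_prop) (measurable_Kf f n)
  · exact Measurable.mul (by fun_prop) ((measurable_Kf f n).comp measurable_fst)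

theorem ae_no_tie (n : ℕ) (j : Fin (n + 1)) :
    ∀ᵐ ω ∂P (n + 1), ∀ i, i ≠ j → (ω i).2 * (1 - (ω j).1) ≠ (ω j).2 * (1 - (ω i).1) := by
  have h := measurePreserving_piFinSuccAbove (α := fun _ : Fin (n + 1) => ℝ × ℝ) (fun _ => μT) j
  have h2 : ∀ᵐ p ∂(μT.prod (P n)), ∀ i, (p.2 i).2 * (1 - p.1.1) ≠ p.1.2 * (1 - (p.2 i).1) := by
    rw [Measure.ae_prod_iff_ae_ae]
    · filter_upwards [ae_muT_lt] with X hX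
      exact ae_PI (ae_muT_no_tie X.1 X.2 hX)
    · have : {p : (ℝ × ℝ) × (Fin n → ℝ × ℝ) | ∀ i, (p.2 i).2 * (1 - p.1.1) ≠ p.1.2 * (1 - (p.2 i).1)} =
        ⋂ i, {p : (ℝ × ℝ) × (Fin n → ℝ × ℝ) | (p.2 i).2 * (1 - p.1.1) = p.1.2 * (1 - (p.2 i).1)}ᶜ := by
        ext p
        simp
      rw [this]
      apply MeasurableSet.iInter
      intro i
      apply MeasurableSet.compl
      apply measurableSet_eq_fun <;> fun_prop
  have h3 := h.quasiMeasurePreserving.ae h2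
  filter_upwards [h3] with ω hω i hi
  obtain ⟨k, rfl⟩ := Fin.exists_succAbove_eq hi
  exact hω k

theorem Lf_succ (f : ℕ → ENNReal) (n : ℕ) :
    Lf f (n + 1) = ∫⁻ x in Set.Ioo (0:ℝ) 1, ENNReal.ofReal (2 * (1 - x)) * Kf f n x := by
  classical
  have h1 : Lf f (n + 1) = ∫⁻ ω, ∑ j, (argm n j).indicator (fun ω => f (N (n + 1) ω)) ω ∂P (n + 1) := by
    apply lintegral_congr_ae
    have ha : ∀ᵐ ω ∂(P (n + 1)), ∀ i, (ω i).1 < 1 := ae_PI ae_muT_lt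
    have hb : ∀ᵐ ω ∂(P (n + 1)), ∀ j i, i ≠ j → (ω i).2 * (1 - (ω j).1) ≠ (ω j).2 * (1 - (ω i).1) :=
      ae_all_iff.2 (ae_no_tie n)
    filter_upwards [ha, hb] with ω ha hb
    obtain ⟨j, hj⟩ := Finite.exists_min (fun i => (ω i).2 / (1 - (ω i).1))
    have hjm : ω ∈ argm n j := by
      intro i
      have := hj i
      rw [div_le_div_iff₀ (by linarith [ha j]) (by linarith [ha i])] at this
      exact this
    rw [Finset.sum_eq_single j]
    · rw [Set.indicator_of_mem hjm]
    · intro i _ hi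
      apply Set.indicator_of_notMem
      intro him
      exact hb j i hi (le_antisymm (him j) (hjm i))
    · simp
  rw [h1, lintegral_finsetSum]
  · simp_rw [lintegral_argm]
    rw [Finset.sum_const, Finset.card_univ, Fintype.card_fin, nsmul_eq_mul, ← mul_assoc]
    have : ((n + 1 : ℕ) : ENNReal) * ENNReal.ofReal (1 / (n + 1)) = 1 := by
      rw [← ENNReal.ofReal_natCast, ← ENNReal.ofReal_mul (by positivity)]
      push_cast
      rw [mul_one_div_cancel (by positivity)]
      simp
    rw [this, one_mul]
  · intro j _
    refine Measurable.indicator ?_ (measurableSet_argm n j)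
    simp_rw [N_eq_nv]
    exact measurable_f_nv f _ _

theorem beta_nat (m : ℕ) : ∀ k : ℕ, ∫ x in (0:ℝ)..1, x ^ k * (1 - x) ^ m =
    (k.factorial : ℝ) * m.factorial / (k + m + 1).factorial := by
  induction m with
  | zero =>
    intro k
    simp [Nat.factorial_succ]
    field_simp
  | succ m ih =>
    intro k
    have h : ∀ x : ℝ, x ^ k * (1 - x) ^ (m + 1) = x ^ k * (1 - x) ^ m - x ^ (k + 1) * (1 - x) ^ m := by
      intro x; ring
    simp_rw [h]
    rw [intervalIntegral.integral_sub, ih, ih]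
    · have e1 : k + 1 + m + 1 = (k + m + 1) + 1 := by ring
      have e2 : k + (m + 1) + 1 = (k + m + 1) + 1 := by ring
      rw [e1, e2, Nat.factorial_succ (k + m + 1), Nat.factorial_succ k, Nat.factorial_succ m]
      push_cast
      field_simp
      ring
    · apply Continuous.intervalIntegrable; fun_prop
    · apply Continuous.intervalIntegrable; fun_prop

theorem Lf_rec (f : ℕ → ENNReal) (n : ℕ) :
    Lf f (n + 1) = ∑ k ∈ Finset.range (n + 1),
      ENNReal.ofReal (2 * ((n:ℝ) + 1 - k) / ((n + 1) * (n + 2))) * Lf (fun i => f (i + 1)) k := by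
  rw [Lf_succ]
  have h1 : ∀ x ∈ Set.Ioo (0:ℝ) 1, ENNReal.ofReal (2 * (1 - x)) * Kf f n x =
      ∑ k ∈ Finset.range (n + 1), ENNReal.ofReal (2 * n.choose k * (x ^ k * (1 - x) ^ (n - k + 1))) *
        Lf (fun i => f (i + 1)) k := by
    intro x hx
    have hx1 : 0 ≤ 1 - x := by linarith [hx.2]
    have hx0 : 0 ≤ x := hx.1.le
    rw [Kf_eq hx.1 hx.2, Finset.mul_sum]
    refine Finset.sum_congr rfl fun k _ => ?_
    rw [← ENNReal.ofReal_pow hx0, ← ENNReal.ofReal_pow hx1, ← ENNReal.ofReal_natCast, ← mul_assoc,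
      ← mul_assoc, ← ENNReal.ofReal_mul (by positivity), ← ENNReal.ofReal_mul (by positivity),
      ← ENNReal.ofReal_mul (by positivity)]
    congr 2
    ring
  rw [setLIntegral_congr_fun measurableSet_Ioo h1, lintegral_finsetSum]
  · refine Finset.sum_congr rfl fun k hk => ?_
    have hk' : k ≤ n := by
      have := Finset.mem_range.1 hk; omega
    rw [lintegral_mul_const _ (by fun_prop), lintegral_Ioo_ofReal _ (by fun_prop),
      intervalIntegral.integral_const_mul, beta_nat]
    · congr 2
      obtain ⟨m, rfl⟩ := Nat.exists_eq_add_of_le hk'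
      have e : k + m - k = m := by omega
      rw [e]
      have e2 : k + (m + 1) + 1 = (k + m) + 1 + 1 := by ring
      have hc : ((k + m).choose k : ℝ) * k.factorial * m.factorial = (k + m).factorial := by
        have := Nat.choose_mul_factorial_mul_factorial (Nat.le_add_right k m)
        rw [e] at this
        exact_mod_cast this
      rw [e2, Nat.factorial_succ (k + m + 1), Nat.factorial_succ (k + m), Nat.factorial_succ m]
      push_cast
      rw [← hc]
      have h3 : ((k + m).choose k : ℝ) ≠ 0 := by
        have := Nat.choose_pos (Nat.le_add_right k m)
        positivity
      field_simp
      ring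
    · intro x hx
      have hx1 : 0 ≤ 1 - x := by linarith [hx.2]
      have hx0 : 0 ≤ x := hx.1.le
      positivity
  · intro k _
    fun_prop

/-- The law of `N n`. -/
def lam (n : ℕ) : Measure ℕ := (P n).map (N n)

theorem measurable_N (n : ℕ) : Measurable (N n) := by
  have : N n = fun ω => nv (1, 0) (0, 1) (Set.range ω) := by
    ext ω; exact N_eq_nv n ω
  rw [this]
  exact measurable_nv _ _

theorem lam_succ (n : ℕ) : lam (n + 1) = ∑ k ∈ Finset.range (n + 1),
    ENNReal.ofReal (2 * ((n:ℝ) + 1 - k) / ((n + 1) * (n + 2))) • (lam k).map (fun i => i + 1) := by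
  apply Measure.ext_of_lintegral
  intro f hf
  have h : ∀ k, ∀ f : ℕ → ENNReal, ∫⁻ i, f i ∂(lam k) = Lf f k := by
    intro k f
    rw [lam, lintegral_map measurable_from_top (measurable_N k), Lf]
  rw [h, Lf_rec, lintegral_finsetSum_measure]
  refine Finset.sum_congr rfl fun k _ => ?_
  rw [lintegral_smul_measure, lintegral_map measurable_from_top measurable_from_top, h, smul_eq_mul]

theorem N_zero (ω : Fin 0 → ℝ × ℝ) : N 0 ω = 0 := by
  rw [N_eq_nv, nv]
  have : (vert (Set.range ω ∪ {(1, 0), (0, 1)})).ncard ≤ ({(1, 0), (0, 1)} : Set (ℝ × ℝ)).ncard := by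
    apply Set.ncard_le_ncard _ (by simp)
    intro w hw
    simpa using hw.1
  rw [Set.ncard_pair (by simp)] at this
  omega

theorem G_eq (n : ℕ) (s : ℝ) : G n s = ∫ i, s ^ i ∂(lam n) := by
  rw [G, lam, integral_map (measurable_N n).aemeasurable]
  exact (measurable_from_top (f := fun i : ℕ => s ^ i)).aestronglyMeasurable

theorem G_zero (s : ℝ) : G 0 s = 1 := by
  rw [G]
  simp [N_zero]

theorem integrable_lam (s : ℝ) (n : ℕ) : Integrable (fun i : ℕ => s ^ i) (lam n) := by
  induction n using Nat.strong_induction_on with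
  | _ n ih =>
    cases n with
    | zero =>
      rw [lam, integrable_map_measure measurable_from_top.aestronglyMeasurable
        (measurable_N 0).aemeasurable]
      have : (fun i : ℕ => s ^ i) ∘ N 0 = fun _ => 1 := by
        funext ω; simp [N_zero]
      rw [this]
      exact integrable_const _
    | succ n =>
      rw [lam_succ, integrable_finsetSum_measure]
      intro k hk
      apply Integrable.smul_measure _ ENNReal.ofReal_ne_top
      rw [integrable_map_measure measurable_from_top.aestronglyMeasurable
        measurable_from_top.aemeasurable]
      have := (ih k (Finset.mem_range.1 hk)).const_mul s
      have e : (fun i : ℕ => s ^ i) ∘ (fun i => i + 1) = fun i => s * s ^ i := by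
        funext i; simp only [Function.comp]; ring
      rw [e]
      exact this

theorem G_succ (s : ℝ) (n : ℕ) : G (n + 1) s = ∑ k ∈ Finset.range (n + 1),
    2 * ((n:ℝ) + 1 - k) / ((n + 1) * (n + 2)) * (s * G k s) := by
  have hInteg : ∀ k, Integrable (fun i : ℕ => s ^ i) ((lam k).map (fun i => i + 1)) := by
    intro k
    rw [integrable_map_measure measurable_from_top.aestronglyMeasurable
        measurable_from_top.aemeasurable]
    have := (integrable_lam s k).const_mul s
    have e : (fun i : ℕ => s ^ i) ∘ (fun i => i + 1) = fun i => s * s ^ i := by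
      funext i; simp only [Function.comp]; ring
    rw [e]
    exact this
  rw [G_eq, lam_succ, integral_finsetSum_measure]
  · refine Finset.sum_congr rfl fun k hk => ?_
    have hk' : (k : ℝ) ≤ n := by
      have := Finset.mem_range.1 hk
      exact_mod_cast Nat.lt_succ_iff.1 this
    rw [integral_smul_measure, integral_map measurable_from_top.aemeasurable
      measurable_from_top.aestronglyMeasurable, ENNReal.toReal_ofReal, smul_eq_mul, G_eq]
    · congr 1
      rw [← integral_const_mul]
      congr 1
      ext i
      ring
    · apply div_nonneg _ (by positivity)
      linarith
  · intro k _
    exact (hInteg k).smul_measure ENNReal.ofReal_ne_top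

/-- Hypergeometric coefficients. -/
def hyp (s : ℝ) (m : ℕ) : ℝ := (∏ i ∈ Finset.range m, ((i : ℝ) * ((i : ℝ) + 1) - 2 * s)) /
  ((m.factorial : ℝ) * ((m + 1).factorial : ℝ))

theorem hyp_zero (s : ℝ) : hyp s 0 = 1 := by simp [hyp]

theorem hyp_succ (s : ℝ) (m : ℕ) :
    ((m : ℝ) + 1) * (m + 2) * hyp s (m + 1) = ((m : ℝ) * (m + 1) - 2 * s) * hyp s m := by
  have h1 : (m.factorial : ℝ) ≠ 0 := by exact_mod_cast m.factorial_ne_zero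
  have h2 : (m : ℝ) + 1 ≠ 0 := by positivity
  have h3 : (m : ℝ) + 2 ≠ 0 := by positivity
  have h4 : (m : ℝ) + 1 + 1 ≠ 0 := by positivity
  rw [hyp, hyp, Finset.prod_range_succ, Nat.factorial_succ (m + 1), Nat.factorial_succ m]
  push_cast
  field_simp
  ring

/-- Binomial transform. -/
def bin (f : ℕ → ℝ) (n : ℕ) : ℝ := ∑ j ∈ Finset.range (n + 1), (n.choose j : ℝ) * f j

theorem bin_succ (f : ℕ → ℝ) (n : ℕ) : bin f (n + 1) = bin f n + bin (fun j => f (j + 1)) n := by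
  unfold bin
  rw [Finset.sum_range_succ' _ (n + 1)]
  simp only [Nat.choose_succ_succ, Nat.cast_add, add_mul, Finset.sum_add_distrib]
  have : ∑ j ∈ Finset.range (n + 1), ((n.choose j : ℕ) : ℝ) * f j =
      ∑ j ∈ Finset.range (n + 1), ((n.choose (j + 1) : ℕ) : ℝ) * f (j + 1) + f 0 := by
    have h := Finset.sum_range_succ (fun j => ((n.choose j : ℕ) : ℝ) * f j) (n + 1)
    rw [Finset.sum_range_succ'] at h
    simp at h
    simp [← h]
  rw [this]
  simp
  ring

theorem bin_zero (f : ℕ → ℝ) : bin f 0 = f 0 := by simp [bin]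

theorem choose_two_shift (n m : ℕ) : ((n : ℝ) + 1) * (n + 2) * (n.choose m) =
    ((m : ℝ) + 1) * (m + 2) * ((n + 2).choose (m + 2) : ℕ) := by
  have h1 : ((n : ℝ) + 1) * (n.choose m) = ((n + 1).choose (m + 1) : ℕ) * ((m : ℝ) + 1) := by
    exact_mod_cast Nat.add_one_mul_choose_eq n m
  have h2 : ((n : ℝ) + 2) * ((n + 1).choose (m + 1) : ℕ) = ((n + 2).choose (m + 2) : ℕ) * ((m : ℝ) + 2) := by
    exact_mod_cast Nat.add_one_mul_choose_eq (n + 1) (m + 1)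
  linear_combination ((n : ℝ) + 2) * h1 + ((m : ℝ) + 1) * h2

/-- The signed coefficients. -/
def sf (s : ℝ) (j : ℕ) : ℝ := (-1) ^ j * hyp s j
def se (s : ℝ) (j : ℕ) : ℝ := (-1) ^ j * ((j : ℝ) * (j + 1)) * hyp s j
def sh (s : ℝ) : ℕ → ℝ
  | 0 => 0
  | j + 1 => se s j

theorem se_succ (s : ℝ) (j : ℕ) : se s (j + 1) = - se s j + 2 * s * sf s j := by
  have := hyp_succ s j
  unfold se sf
  push_cast
  rw [pow_succ]
  linear_combination (-(-1) ^ j) * this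

theorem bin_se_succ (s : ℝ) (n : ℕ) : bin (se s) (n + 1) = 2 * s * bin (sf s) n := by
  rw [bin_succ]
  simp only [se_succ]
  unfold bin
  rw [← Finset.sum_add_distrib, Finset.mul_sum]
  exact Finset.sum_congr rfl fun j _ => by ring

theorem bin_sh_succ (s : ℝ) (n : ℕ) : bin (sh s) (n + 1) = bin (sh s) n + bin (se s) n := by
  rw [bin_succ]; rfl

theorem bin_sh (s : ℝ) (n : ℕ) : bin (sh s) (n + 2) =
    2 * s * ∑ k ∈ Finset.range (n + 1), bin (sf s) k := by
  induction n with
  | zero => simp [bin_sh_succ, bin_se_succ, bin_zero, sh, se]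
  | succ n ih => rw [bin_sh_succ, ih, Finset.sum_range_succ _ (n + 1), bin_se_succ]; ring

theorem bin_sh' (s : ℝ) (n : ℕ) : bin (sh s) (n + 2) =
    ((n : ℝ) + 1) * (n + 2) * (bin (sf s) (n + 1) - bin (sf s) n) := by
  rw [bin_succ (sf s), add_sub_cancel_left]
  unfold bin
  rw [Finset.sum_range_succ', Finset.sum_range_succ', Finset.mul_sum]
  have h0 : sh s 0 = 0 := rfl
  have h1 : sh s (0 + 1) = 0 := by simp [sh, se]
  rw [h0, h1, mul_zero, mul_zero, add_zero, add_zero]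
  refine Finset.sum_congr rfl fun m _ => ?_
  have h := choose_two_shift n m
  simp only [sh, se, sf]
  push_cast at h ⊢
  linear_combination (-(-1) ^ (m + 1) * hyp s (m + 1)) * h

theorem sum_weights (g : ℕ → ℝ) (n : ℕ) :
    ∑ k ∈ Finset.range (n + 1), ((n : ℝ) + 1 - k) * g k =
    ∑ k ∈ Finset.range (n + 1), ∑ j ∈ Finset.range (k + 1), g j := by
  induction n with
  | zero => simp
  | succ n ih =>
    rw [Finset.sum_range_succ (fun k => ∑ j ∈ Finset.range (k + 1), g j) (n + 1), ← ih,
      Finset.sum_range_succ, Finset.sum_range_succ g (n + 1),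
      ← add_assoc, ← Finset.sum_add_distrib]
    congr 1
    · refine Finset.sum_congr rfl fun j _ => ?_
      push_cast; ring
    · push_cast; ring

theorem G_succ' (s : ℝ) (n : ℕ) : ((n : ℝ) + 1) * (n + 2) * G (n + 1) s =
    2 * s * ∑ k ∈ Finset.range (n + 1), ((n : ℝ) + 1 - k) * G k s := by
  have h2 : (n : ℝ) + 1 ≠ 0 := by positivity
  have h3 : (n : ℝ) + 2 ≠ 0 := by positivity
  rw [G_succ, Finset.mul_sum, Finset.mul_sum]
  refine Finset.sum_congr rfl fun j _ => ?_
  field_simp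

theorem sum_G (s : ℝ) (n : ℕ) : ∑ k ∈ Finset.range (n + 1), G k s = bin (sf s) n := by
  induction n using Nat.strong_induction_on with
  | _ n ih =>
    cases n with
    | zero => simp [G_zero, bin_zero, sf, hyp_zero]
    | succ n =>
      have h := G_succ' s n
      rw [sum_weights, Finset.sum_congr rfl fun k hk => ih k (Finset.mem_range.1 hk), ← bin_sh,
        bin_sh'] at h
      have h2 : ((n : ℝ) + 1) * (n + 2) ≠ 0 := by positivity
      have := mul_left_cancel₀ h2 h
      rw [Finset.sum_range_succ, ih n (Nat.lt_succ_self n), this]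
      ring

theorem sum_weights_one (n : ℕ) :
    ∑ k ∈ Finset.range (n + 1), 2 * ((n:ℝ) + 1 - k) / ((n + 1) * (n + 2)) = 1 := by
  rw [← Finset.sum_div, div_eq_one_iff_eq (by positivity), ← Finset.mul_sum]
  have h : ∀ m : ℕ, ∑ k ∈ Finset.range m, (k : ℝ) = m * (m - 1) / 2 := by
    intro m
    induction m with
    | zero => simp
    | succ m ih => rw [Finset.sum_range_succ, ih]; push_cast; ring
  rw [Finset.sum_sub_distrib, h]
  simp
  ring

theorem abs_G_le (s : ℝ) (n : ℕ) : |G n s| ≤ (|s| + |1 - s|) ^ n := by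
  have hM1 : 1 ≤ |s| + |1 - s| := by
    have := abs_add_le s (1 - s)
    simpa using this
  have hMs : |s| ≤ |s| + |1 - s| := by linarith [abs_nonneg (1 - s)]
  generalize |s| + |1 - s| = M at *
  induction n using Nat.strong_induction_on with
  | _ n ih =>
    cases n with
    | zero => simp [G_zero]
    | succ n =>
      rw [G_succ]
      calc _ ≤ ∑ k ∈ Finset.range (n + 1), |2 * ((n:ℝ) + 1 - k) / ((n + 1) * (n + 2)) * (s * G k s)| :=
            Finset.abs_sum_le_sum_abs _ _
        _ ≤ ∑ k ∈ Finset.range (n + 1), 2 * ((n:ℝ) + 1 - k) / ((n + 1) * (n + 2)) * M ^ (n + 1) := by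
            refine Finset.sum_le_sum fun k hk => ?_
            have hk := Finset.mem_range.1 hk
            have hk' : (k : ℝ) ≤ n := by exact_mod_cast Nat.lt_succ_iff.1 hk
            have hw : 0 ≤ 2 * ((n:ℝ) + 1 - k) / ((n + 1) * (n + 2)) := by
              apply div_nonneg _ (by positivity)
              linarith
            rw [abs_mul, abs_of_nonneg hw, abs_mul]
            apply mul_le_mul_of_nonneg_left _ hw
            calc |s| * |G k s| ≤ M * M ^ n := by
                  apply mul_le_mul hMs _ (abs_nonneg _) (by linarith)
                  exact (ih k hk).trans (pow_le_pow_right₀ hM1 (Nat.lt_succ_iff.1 hk))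
              _ = M ^ (n + 1) := by ring
        _ = M ^ (n + 1) := by rw [← Finset.sum_mul, sum_weights_one, one_mul]

theorem summable_G (s r : ℝ) (hr : |r| < (|s| + |1 - s|)⁻¹) :
    Summable fun l : ℕ => |G l s * r ^ l| := by
  have hM1 : 1 ≤ |s| + |1 - s| := by
    have := abs_add_le s (1 - s)
    simpa using this
  have hlt : (|s| + |1 - s|) * |r| < 1 := by
    have := mul_lt_mul_of_pos_left hr (by linarith : 0 < |s| + |1 - s|)
    rwa [mul_inv_cancel₀ (by linarith)] at this
  refine Summable.of_nonneg_of_le (fun _ => abs_nonneg _) (fun l => ?_)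
    (summable_geometric_of_lt_one (by positivity) hlt)
  rw [abs_mul, abs_pow, mul_pow]
  exact mul_le_mul_of_nonneg_right (abs_G_le s l) (by positivity)

theorem summable_hyp (s w : ℝ) (hw : |w| < 1) : Summable fun m : ℕ => |hyp s m * w ^ m| := by
  obtain ⟨r, hr1, hr2⟩ := exists_between hw
  have hlim : Filter.Tendsto (fun m : ℕ => ((1 : ℝ) + 2 * |s| / (m + 1)) * |w|) Filter.atTop
      (nhds ((1 + 0) * |w|)) := by
    apply Filter.Tendsto.mul_const
    apply Filter.Tendsto.const_add
    exact (tendsto_const_div_atTop_nhds_zero_nat (2 * |s|)).comp (Filter.tendsto_add_atTop_nat 1) |>.congr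
      (fun n => by simp)
  have hev := hlim.eventually (gt_mem_nhds (by linarith : (1 + 0) * |w| < r))
  apply summable_of_ratio_norm_eventually_le hr2
  filter_upwards [hev] with m hm
  simp only [Real.norm_eq_abs, abs_abs]
  have h := hyp_succ s m
  have hm1 : (0:ℝ) < m + 1 := by positivity
  have hb : |hyp s (m + 1)| ≤ (1 + 2 * |s| / (m + 1)) * |hyp s m| := by
    have h5 : ((m:ℝ) + 1) * (m + 2) * |hyp s (m + 1)| = |(m:ℝ) * (m + 1) - 2 * s| * |hyp s m| := by
      rw [← abs_mul, ← h, abs_mul, abs_of_pos (by positivity : (0:ℝ) < (m + 1) * (m + 2))]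
    have h6 : |(m:ℝ) * (m + 1) - 2 * s| ≤ m * (m + 1) + 2 * |s| := by
      refine (abs_sub _ _).trans ?_
      rw [abs_of_nonneg (by positivity), abs_mul, abs_of_pos (by norm_num : (0:ℝ) < 2)]
    have h7 : (m:ℝ) * (m + 1) + 2 * |s| ≤ (m + 1) * (m + 2) * (1 + 2 * |s| / (m + 1)) := by
      have : ((m:ℝ) + 1) * (m + 2) * (1 + 2 * |s| / (m + 1)) = (m + 1) * (m + 2) + (m + 2) * (2 * |s|) := by
        field_simp
      rw [this]
      nlinarith [abs_nonneg s, mul_nonneg hm1.le (abs_nonneg s)]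
    have h8 : ((m:ℝ) + 1) * (m + 2) * |hyp s (m + 1)| ≤
        (m + 1) * (m + 2) * ((1 + 2 * |s| / (m + 1)) * |hyp s m|) := by
      rw [h5, ← mul_assoc]
      exact mul_le_mul_of_nonneg_right (h6.trans h7) (abs_nonneg _)
    exact le_of_mul_le_mul_left h8 (by positivity)
  rw [abs_mul, abs_mul, pow_succ, abs_mul (w ^ m)]
  calc |hyp s (m + 1)| * (|w ^ m| * |w|) ≤ (1 + 2 * |s| / (m + 1)) * |hyp s m| * (|w ^ m| * |w|) :=
        mul_le_mul_of_nonneg_right hb (by positivity)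
    _ = (1 + 2 * |s| / (m + 1)) * |w| * (|hyp s m| * |w ^ m|) := by ring
    _ ≤ r * (|hyp s m| * |w ^ m|) := mul_le_mul_of_nonneg_right hm.le (by positivity)

theorem hasSum_choose_pow (j : ℕ) {r : ℝ} (hr : |r| < 1) :
    HasSum (fun n : ℕ => (n.choose j : ℝ) * r ^ n) (r ^ j / (1 - r) ^ (j + 1)) := by
  have h := (hasSum_choose_mul_geometric_of_norm_lt_one j (r := r) hr).mul_left (r ^ j)
  rw [← hasSum_nat_add_iff' j]
  have h0 : ∑ i ∈ Finset.range j, (i.choose j : ℝ) * r ^ i = 0 :=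
    Finset.sum_eq_zero fun i hi => by
      rw [Nat.choose_eq_zero_of_lt (Finset.mem_range.1 hi)]; simp
  rw [h0, sub_zero]
  have e1 : (fun n : ℕ => ((n + j).choose j : ℝ) * r ^ (n + j)) =
      fun n : ℕ => r ^ j * (((n + j).choose j : ℝ) * r ^ n) := by
    funext n
    rw [pow_add]; ring
  have e2 : r ^ j / (1 - r) ^ (j + 1) = r ^ j * (1 / (1 - r) ^ (j + 1)) := by ring
  rw [e1, e2]
  exact h

theorem bin_eq_tsum (f : ℕ → ℝ) (n : ℕ) : bin f n = ∑' j : ℕ, (n.choose j : ℝ) * f j := by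
  rw [bin, tsum_eq_sum]
  intro j hj
  rw [Nat.choose_eq_zero_of_lt (by simpa using hj)]
  simp

theorem summable_double (s z : ℝ) (hz : |z| < 1 / 2) :
    Summable fun p : ℕ × ℕ => (p.2.choose p.1 : ℝ) * sf s p.1 * z ^ p.2 := by
  have hz1 : |z| < 1 := by linarith
  apply Summable.of_norm
  rw [summable_prod_of_nonneg (fun _ => norm_nonneg _)]
  have key : ∀ j : ℕ, HasSum (fun n : ℕ => ‖(n.choose j : ℝ) * sf s j * z ^ n‖)
      (|hyp s j| * (|z| ^ j / (1 - |z|) ^ (j + 1))) := by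
    intro j
    have e : (fun n : ℕ => ‖(n.choose j : ℝ) * sf s j * z ^ n‖) =
        fun n : ℕ => |hyp s j| * ((n.choose j : ℝ) * |z| ^ n) := by
      funext n
      simp [sf, abs_mul]
      ring
    rw [e]
    exact (hasSum_choose_pow j (r := |z|) (by rwa [abs_abs])).mul_left (|hyp s j|)
  refine ⟨fun j => (key j).summable, ?_⟩
  have e : (fun j : ℕ => ∑' n : ℕ, ‖(n.choose j : ℝ) * sf s j * z ^ n‖) =
      fun j => (1 - |z|)⁻¹ * |hyp s j * (|z| / (1 - |z|)) ^ j| := by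
    funext j
    rw [(key j).tsum_eq, abs_mul, abs_of_nonneg (a := (|z| / (1 - |z|)) ^ j), div_pow, pow_succ]
    · have : 1 - |z| ≠ 0 := by linarith
      field_simp
    · have : 0 ≤ 1 - |z| := by linarith
      positivity
  show Summable (fun j : ℕ => ∑' n : ℕ, ‖(n.choose j : ℝ) * sf s j * z ^ n‖)
  rw [e]
  apply Summable.mul_left
  apply summable_hyp
  have h1 : 0 < 1 - |z| := by linarith
  rw [abs_of_nonneg (by positivity), div_lt_one h1]
  linarith

theorem local_eq (s z : ℝ) (hz : |z| < (|s| + |1 - s|)⁻¹) (hz2 : |z| < 1 / 2) :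
    ∑' l : ℕ, G l s * z ^ l = ∑' m : ℕ, hyp s m * (z / (z - 1)) ^ m := by
  have hz1 : |z| < 1 := by linarith
  have hz1' : 1 - z ≠ 0 := by linarith [le_abs_self z]
  have hz1'' : z - 1 ≠ 0 := by linarith [le_abs_self z]
  have hS := summable_double s z hz2
  have h1 : ∑' n : ℕ, ∑' j : ℕ, (n.choose j : ℝ) * sf s j * z ^ n =
      (1 - z)⁻¹ * ∑' m : ℕ, hyp s m * (z / (z - 1)) ^ m := by
    rw [Summable.tsum_comm (f := fun j n : ℕ => (n.choose j : ℝ) * sf s j * z ^ n) hS, ← tsum_mul_left]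
    congr 1
    funext j
    have h2 := (hasSum_choose_pow j hz1).mul_left (sf s j)
    have e : (fun n : ℕ => (n.choose j : ℝ) * sf s j * z ^ n) =
      fun n : ℕ => sf s j * ((n.choose j : ℝ) * z ^ n) := by funext n; ring
    rw [e, h2.tsum_eq, sf]
    have : z / (z - 1) = (-1) * (z / (1 - z)) := by field_simp; ring
    rw [this, mul_pow, div_pow, pow_succ]
    field_simp
  have h3 : ∀ n : ℕ, ∑' j : ℕ, (n.choose j : ℝ) * sf s j * z ^ n =
      ∑ k ∈ Finset.range (n + 1), G k s * z ^ k * z ^ (n - k) := by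
    intro n
    rw [tsum_mul_right, ← bin_eq_tsum, ← sum_G, Finset.sum_mul]
    refine Finset.sum_congr rfl fun k hk => ?_
    rw [mul_assoc, ← pow_add, Nat.add_sub_cancel' (Nat.lt_succ_iff.1 (Finset.mem_range.1 hk))]
  have h4 := tsum_mul_tsum_eq_tsum_sum_range_of_summable_norm (f := fun l : ℕ => G l s * z ^ l)
    (g := fun l : ℕ => z ^ l) (summable_G s z hz) (by
      simpa using summable_geometric_of_lt_one (abs_nonneg z) hz1)
  rw [tsum_geometric_of_abs_lt_one hz1] at h4
  simp only [h3] at h1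
  rw [← h4, mul_comm] at h1
  exact mul_left_cancel₀ (inv_ne_zero hz1') h1

theorem analyticAt_tsum (a : ℕ → ℝ) (r x : ℝ) (hx : |x| < r)
    (h : Summable fun n : ℕ => |a n * r ^ n|) :
    AnalyticAt ℝ (fun x => ∑' n : ℕ, a n * x ^ n) x := by
  have hr : 0 < r := (abs_nonneg x).trans_lt hx
  set p := FormalMultilinearSeries.ofScalars ℝ a with hp
  have hle : ENNReal.ofReal r ≤ p.radius := by
    apply p.le_radius_of_summable_norm (r := r.toNNReal)
    convert h using 1
    funext n
    rw [hp, FormalMultilinearSeries.ofScalars_norm, abs_mul, Real.norm_eq_abs, abs_pow,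
      abs_of_pos hr, Real.coe_toNNReal _ hr.le]
  have hpos : 0 < p.radius := lt_of_lt_of_le (by simpa using hr) hle
  have hb := (p.hasFPowerSeriesOnBall hpos).analyticAt_of_mem (y := x) (by
    apply Metric.eball_subset_eball hle
    rw [Metric.eball_ofReal]
    simpa using hx)
  convert hb using 1
  funext y
  have := FormalMultilinearSeries.ofScalars_sum_eq (E := ℝ) a y
  simp only [smul_eq_mul] at this
  exact this.symm

theorem abs_w_lt {x : ℝ} (hx : x < 1 / 2) : |x / (x - 1)| < 1 := by
  have h : x - 1 < 0 := by linarith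
  rw [abs_div, div_lt_one (abs_pos.2 h.ne), abs_of_neg h, abs_lt]
  constructor <;> linarith

theorem global_eq (s z : ℝ) (hz : |z| < (|s| + |1 - s|)⁻¹) (hz2 : z < 1 / 2) :
    ∑' l : ℕ, G l s * z ^ l = ∑' m : ℕ, hyp s m * (z / (z - 1)) ^ m := by
  have hR : 0 < (|s| + |1 - s|)⁻¹ := (abs_nonneg z).trans_lt hz
  have hbox : ∀ x : ℝ, x ∈ Set.Ioo (-(|s| + |1 - s|)⁻¹) (min (|s| + |1 - s|)⁻¹ (1 / 2)) ↔
      |x| < (|s| + |1 - s|)⁻¹ ∧ x < 1 / 2 := by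
    intro x
    rw [Set.mem_Ioo, lt_min_iff, abs_lt]
    tauto
  have h1 : AnalyticOnNhd ℝ (fun x => ∑' l : ℕ, G l s * x ^ l)
      (Set.Ioo (-(|s| + |1 - s|)⁻¹) (min (|s| + |1 - s|)⁻¹ (1 / 2))) := by
    intro x hx
    rw [hbox] at hx
    obtain ⟨r, hr1, hr2⟩ := exists_between hx.1
    refine analyticAt_tsum (fun l => G l s) r x hr1 (summable_G s r ?_)
    rwa [abs_of_pos ((abs_nonneg x).trans_lt hr1)]
  have h2 : AnalyticOnNhd ℝ (fun x => ∑' m : ℕ, hyp s m * (x / (x - 1)) ^ m)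
      (Set.Ioo (-(|s| + |1 - s|)⁻¹) (min (|s| + |1 - s|)⁻¹ (1 / 2))) := by
    intro x hx
    rw [hbox] at hx
    obtain ⟨r, hr1, hr2⟩ := exists_between (abs_w_lt hx.2)
    have h3 := analyticAt_tsum (hyp s) r _ hr1 (summable_hyp s r (by
      rwa [abs_of_pos ((abs_nonneg _).trans_lt hr1)]))
    have h4 : AnalyticAt ℝ (fun x : ℝ => x / (x - 1)) x :=
      analyticAt_id.div (analyticAt_id.sub analyticAt_const) (by linarith [hx.2])
    exact AnalyticAt.fun_comp (f := fun x : ℝ => x / (x - 1)) h3 h4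
  refine h1.eqOn_of_preconnected_of_eventuallyEq h2 isPreconnected_Ioo (z₀ := 0) ?_ ?_ ((hbox z).2 ⟨hz, hz2⟩)
  · rw [hbox]; simpa using hR
  · have ho : ∀ᶠ x : ℝ in nhds 0, |x| < min (|s| + |1 - s|)⁻¹ (1 / 2) := by
      have : Filter.Tendsto (fun x : ℝ => |x|) (nhds 0) (nhds |0|) := continuous_abs.tendsto 0
      exact this.eventually (gt_mem_nhds (by simpa using hR))
    filter_upwards [ho] with x hx
    rw [lt_min_iff] at hx
    exact local_eq s x hx.1 hx.2

/-- for `|z| < (|s| + |1-s|)⁻¹` and `z < 1/2`, the series `Σ z^ℓ G_ℓ(s)`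
converges absolutely and equals the (absolutely convergent) Gauss hypergeometric series
`Σ_m (Π_{i=0}^{m-1}(i(i+1) - 2s)) / (m!(m+1)!) · (z/(z-1))^m`. -/
theorem stmt6 (s z : ℝ) (hz : |z| < (|s| + |1 - s|)⁻¹) (hz2 : z < 1 / 2) :
    Summable (fun l : ℕ => |z ^ l * G l s|) ∧
    Summable (fun m : ℕ =>
      |(∏ i ∈ Finset.range m, ((i : ℝ) * ((i : ℝ) + 1) - 2 * s)) /
          ((m.factorial : ℝ) * ((m + 1).factorial : ℝ)) * (z / (z - 1)) ^ m|) ∧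
    (∑' l : ℕ, z ^ l * G l s
      = ∑' m : ℕ, (∏ i ∈ Finset.range m, ((i : ℝ) * ((i : ℝ) + 1) - 2 * s)) /
          ((m.factorial : ℝ) * ((m + 1).factorial : ℝ)) * (z / (z - 1)) ^ m) := by
  refine ⟨?_, summable_hyp s _ (abs_w_lt hz2), ?_⟩
  · simpa only [mul_comm] using summable_G s z hz
  · have h := global_eq s z hz hz2
    simp only [hyp] at h
    rw [← h]
    simp only [mul_comm]

end
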